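/- The topological complexity of the configuration space of n ≥ 2 ordered distinct points in ℝ³ equals 2n − 1. -/

import Mathlib

/-- The space of continuous paths `[0,1] → X`, with the compact-open topology. -/
abbrev PathSpace (X : Type*) [TopologicalSpace X] := C(unitInterval, X)

/-- `U ⊆ X × X` admits a continuous section of the path fibration
`π : PX → X × X`, `π(γ) = (γ 0, γ 1)`. -/
def HasMotionPlanningSection (X : Type*) [TopologicalSpace X] (U : Set (X × X)) : Prop :=
  ∃ s : C(U, PathSpace X), ∀ p : U, s p 0 = (p : X × X).1 ∧ s p 1 = (p : X × X).2

/-- `X × X` can be covered by `k` open sets, over each of which the path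
fibration admits a continuous section. -/
def HasTCCover (X : Type*) [TopologicalSpace X] (k : ℕ) : Prop :=
  ∃ U : Fin k → Set (X × X), (∀ i, IsOpen (U i)) ∧ (⋃ i, U i) = Set.univ ∧
    ∀ i, HasMotionPlanningSection X (U i)

/-- The topological complexity of `X` (in the unnormalized convention of Farber,
so that `TopComplexity(point) = 1`), as an extended natural number. -/
noncomputable def TopComplexity (X : Type*) [TopologicalSpace X] : ℕ∞ :=
  sInf {N : ℕ∞ | ∃ k : ℕ, N = k ∧ HasTCCover X k}

/-- The configuration space of `n` ordered distinct points in `ℝ^m`. -/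
abbrev ConfSpace (n m : ℕ) := {f : Fin n → (Fin m → ℝ) // Function.Injective f}

/-!
Lower bound. Let `w : T² → ℝ³ ∖ {0}` have degree one. A product of `m` tori `T²` maps to the
configuration space of `m + 1` points by putting the first point at the origin and the others on
spheres of different radii, in the directions given by `w`. Two such families, together
parametrized by `2m` tori `T²`, are compared: over a set with a motion planner, moving along the
planned paths gives homotopies, through nonzero vectors, between the values of `w` on the two
`i`-th tori, for every `i`. So the class `∑ i, (a (i, 0) - a (i, 1))`, where `a t` is the pullback
of the generator of `H²(ℝ³ ∖ {0})` by `w` on the torus `t`, is zero over this set. If `2m` such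
sets covered everything, the `2m`-th power of the class would vanish, but it is `± (2m)!` times the
fundamental class. Cohomology enters through simplicial cochains on fine Kuhn triangulations of
tori, whose values come from labeling nonzero vectors by the vertices of a tetrahedron with
boundary a `2`-sphere.

Upper bound. Configurations are stratified by the weak order of their first coordinates. A stratum
has a neighbourhood that is contractible in the configuration space: spread the points out along
the first axis, move them freely in the other coordinates, and line them up along the second axis.
Passing to the boundary of a stratum lowers the number of distinct first coordinates, which is
between `1` and `m + 1`, so neighbourhoods of strata of equal rank can be made disjoint. On pairs
of configurations the rank takes `2m + 1` values.
-/

section Cochains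

variable {G A : Type*} [CommRing A]

/-- The increasing enumeration of `ℕ ∖ {i}`. -/
def skipIndex (i k : ℕ) : ℕ := if k < i then k else k + 1

theorem skipIndex_of_lt {i k : ℕ} (h : k < i) : skipIndex i k = k := if_pos h

theorem skipIndex_of_le {i k : ℕ} (h : i ≤ k) : skipIndex i k = k + 1 := if_neg h.not_gt

theorem skipIndex_comp_skipIndex {i j : ℕ} (h : i ≤ j) :
    skipIndex (j + 1) ∘ skipIndex i = skipIndex i ∘ skipIndex j := by
  funext k
  simp only [Function.comp_apply, skipIndex]
  split_ifs <;> omega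

/-- The coboundary of simplicial cochains of degree `n` on the full simplex with vertex set `G`.
A cochain is encoded as a function of an infinite sequence of vertices; that it has degree `n`,
hence depends on the first `n + 1` vertices only, is expressed by `DependsOn F (Set.Iic n)`. -/
def cobd (n : ℕ) : ((ℕ → G) → A) →ₗ[A] (ℕ → G) → A where
  toFun F s := ∑ i ∈ Finset.range (n + 2), (-1) ^ i * F (s ∘ skipIndex i)
  map_add' F H := by
    funext s
    simp only [Pi.add_apply, mul_add, Finset.sum_add_distrib]
  map_smul' a F := by
    funext s
    simp only [Pi.smul_apply, smul_eq_mul, RingHom.id_apply, Finset.mul_sum, mul_left_comm]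

theorem cobd_apply (n : ℕ) (F : (ℕ → G) → A) (s : ℕ → G) :
    cobd n F s = ∑ i ∈ Finset.range (n + 2), (-1) ^ i * F (s ∘ skipIndex i) := rfl

theorem dependsOn_cobd {n : ℕ} {F : (ℕ → G) → A} (hF : DependsOn F (Set.Iic n)) :
    DependsOn (cobd n F) (Set.Iic (n + 1)) := by
  intro s s' h
  simp only [cobd_apply]
  refine Finset.sum_congr rfl fun i _ => congrArg _ (hF fun k hk => h _ ?_)
  simp only [Set.mem_Iic, skipIndex] at hk ⊢
  split_ifs <;> omega

theorem cobd_cobd (n : ℕ) (F : (ℕ → G) → A) : cobd (n + 1) (cobd n F) = 0 := by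
  funext s
  simp only [cobd_apply, Finset.mul_sum, ← Finset.sum_product', Pi.zero_apply]
  refine Finset.sum_involution
    (fun a _ => if a.2 < a.1 then (a.2, a.1 - 1) else (a.2 + 1, a.1)) ?_ ?_ ?_ ?_
  · rintro ⟨j, i⟩ -
    dsimp only
    split_ifs with h
    · obtain ⟨j, rfl⟩ := Nat.exists_eq_add_one_of_ne_zero (Nat.ne_zero_of_lt h)
      simp only [Function.comp_assoc, skipIndex_comp_skipIndex (Nat.lt_succ_iff.mp h),
        Nat.add_sub_cancel]
      ring
    · simp only [Function.comp_assoc, skipIndex_comp_skipIndex (not_lt.mp h)]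
      ring
  · rintro ⟨j, i⟩ - -
    dsimp only
    split_ifs <;> simp only [ne_eq, Prod.mk.injEq] <;> omega
  · rintro ⟨j, i⟩ h
    simp only [Finset.mem_product, Finset.mem_range] at h ⊢
    split_ifs <;> omega
  · rintro ⟨j, i⟩ -
    by_cases h : i < j
    · simp only [h, if_true, show ¬ j - 1 < i by omega, if_false, Prod.mk.injEq, and_true]
      omega
    · simp [h, show j < i + 1 by omega]

/-- The cup product of a cochain of degree `p` with a cochain of any degree. -/
def cup (p : ℕ) (F H : (ℕ → G) → A) (s : ℕ → G) : A := F s * H fun k => s (k + p)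

theorem dependsOn_cup {p q : ℕ} {F H : (ℕ → G) → A} (hF : DependsOn F (Set.Iic p))
    (hH : DependsOn H (Set.Iic q)) : DependsOn (cup p F H) (Set.Iic (p + q)) := by
  intro s s' h
  simp only [Set.mem_Iic] at h
  exact congrArg₂ (· * ·) (hF fun k hk => h k (Nat.le_add_right_of_le hk))
    (hH fun k hk => h _ (by simp only [Set.mem_Iic] at hk; omega))

theorem cup_comp_skipIndex_of_le {p i : ℕ} (hi : i ≤ p) (F H : (ℕ → G) → A) (s : ℕ → G) :
    cup p F H (s ∘ skipIndex i) = F (s ∘ skipIndex i) * H fun k => s (k + (p + 1)) := by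
  have htail : (fun k => (s ∘ skipIndex i) (k + p)) = fun k => s (k + (p + 1)) :=
    funext fun k => congrArg s (skipIndex_of_le (by omega))
  rw [cup, htail]

theorem cup_comp_skipIndex_of_lt {p : ℕ} (i : ℕ) {F : (ℕ → G) → A} (hF : DependsOn F (Set.Iic p))
    (H : (ℕ → G) → A) (s : ℕ → G) :
    cup p F H (s ∘ skipIndex (p + 1 + i)) = F s * H ((fun k => s (k + p)) ∘ skipIndex (i + 1)) := by
  have hhead : F (s ∘ skipIndex (p + 1 + i)) = F s :=
    hF fun k hk => congrArg s (skipIndex_of_lt (by simp only [Set.mem_Iic] at hk; omega))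
  have htail : (fun k => (s ∘ skipIndex (p + 1 + i)) (k + p)) =
      (fun k => s (k + p)) ∘ skipIndex (i + 1) := by
    funext k
    simp only [Function.comp_apply, skipIndex]
    congr 1
    split_ifs <;> omega
  rw [cup, hhead, htail]

theorem cobd_cup {p : ℕ} (q : ℕ) {F : (ℕ → G) → A} (hF : DependsOn F (Set.Iic p))
    (H : (ℕ → G) → A) :
    cobd (p + q) (cup p F H) = cup (p + 1) (cobd p F) H + (-1 : A) ^ p • cup p F (cobd q H) := by
  funext s
  have hleft : ∑ i ∈ Finset.range (p + 1), (-1) ^ i * cup p F H (s ∘ skipIndex i) =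
      (∑ i ∈ Finset.range (p + 1), (-1) ^ i * F (s ∘ skipIndex i)) *
        H fun k => s (k + (p + 1)) := by
    rw [Finset.sum_mul]
    refine Finset.sum_congr rfl fun i hi => ?_
    rw [cup_comp_skipIndex_of_le (Nat.lt_succ_iff.mp (Finset.mem_range.mp hi)), mul_assoc]
  have hright : ∑ i ∈ Finset.range (q + 1), (-1) ^ (p + 1 + i) *
        cup p F H (s ∘ skipIndex (p + 1 + i)) =
      (-1) ^ p * (F s * ∑ i ∈ Finset.range (q + 1),
        (-1) ^ (i + 1) * H ((fun k => s (k + p)) ∘ skipIndex (i + 1))) := by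
    simp only [Finset.mul_sum]
    refine Finset.sum_congr rfl fun i _ => ?_
    rw [cup_comp_skipIndex_of_lt i hF]
    ring
  have hhead : F (s ∘ skipIndex (p + 1)) = F s :=
    hF fun k hk => congrArg s (skipIndex_of_lt (Nat.lt_succ_of_le hk))
  have hmiddle : (fun k => s (k + p)) ∘ skipIndex 0 = fun k => s (k + (p + 1)) := by
    funext k
    simp only [Function.comp_apply, skipIndex_of_le (Nat.zero_le k), add_right_comm k 1 p,
      add_assoc]
  rw [cobd_apply, show p + q + 2 = p + 1 + (q + 1) by omega, Finset.sum_range_add, hleft, hright]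
  simp only [Pi.add_apply, Pi.smul_apply, smul_eq_mul, cup, cobd_apply]
  rw [Finset.sum_range_succ _ (p + 1), Finset.sum_range_succ' _ (q + 1), hmiddle, hhead]
  ring

/-- The cup product of a finite family of cochains of degree `p`. -/
def cupProd (p : ℕ) {M : ℕ} (F : Fin M → (ℕ → G) → A) (s : ℕ → G) : A :=
  ∏ j, F j fun k => s (k + p * j)

theorem cupProd_succ (p : ℕ) {M : ℕ} (F : Fin (M + 1) → (ℕ → G) → A) :
    cupProd p F = cup p (F 0) (cupProd p fun j => F j.succ) := by
  funext s
  simp only [cupProd, cup, Fin.prod_univ_succ, Fin.val_zero, mul_zero, add_zero, Fin.val_succ,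
    mul_add, mul_one, add_assoc]

theorem cupProd_sum {T : Type*} [Fintype T] (p : ℕ) {M : ℕ} (F : Fin M → T → (ℕ → G) → A) :
    cupProd p (fun j => ∑ t, F j t) = ∑ v : Fin M → T, cupProd p fun j => F j (v j) := by
  classical
  funext s
  simp only [cupProd, Finset.sum_apply, Finset.prod_univ_sum, Fintype.piFinset_univ]

theorem dependsOn_cupProd {p M : ℕ} {F : Fin M → (ℕ → G) → A}
    (hF : ∀ j, DependsOn (F j) (Set.Iic p)) : DependsOn (cupProd p F) (Set.Iic (p * M)) := by
  intro s s' h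
  refine Finset.prod_congr rfl fun j _ => hF j fun k hk => h _ ?_
  have hj : p * (j + 1) ≤ p * M := Nat.mul_le_mul_left p j.2
  simp only [Set.mem_Iic] at hk ⊢
  linarith

section Along

variable {S : Set (ℕ → G)} (hS : ∀ s ∈ S, ∀ k, (fun i => s (i + k)) ∈ S)
include hS

theorem cobd_cupProd_eq_zero {p M : ℕ} {F : Fin M → (ℕ → G) → A}
    (hF : ∀ j, DependsOn (F j) (Set.Iic p)) (hclosed : ∀ j, ∀ s ∈ S, cobd p (F j) s = 0) :
    ∀ s ∈ S, cobd (p * M) (cupProd p F) s = 0 := by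
  induction M with
  | zero => intro s _; simp [cobd_apply, cupProd, Finset.sum_range_succ]
  | succ M ih =>
    intro s hs
    rw [Nat.mul_succ, add_comm, cupProd_succ, cobd_cup _ (hF 0)]
    simp only [Pi.add_apply, Pi.smul_apply, cup, hclosed 0 s hs,
      ih (fun j => hF j.succ) (fun j => hclosed j.succ) _ (hS s hs p), zero_mul, mul_zero,
      smul_zero, add_zero]

/-- Changing closed cochains by coboundaries changes their cup product by a coboundary. -/
theorem exists_cobd_eq_cupProd_sub {q M : ℕ} {F b : Fin (M + 1) → (ℕ → G) → A}
    (hF : ∀ j, DependsOn (F j) (Set.Iic (q + 1))) (hb : ∀ j, DependsOn (b j) (Set.Iic q))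
    (hclosed : ∀ j, ∀ s ∈ S, cobd (q + 1) (F j) s = 0) :
    ∃ Q : (ℕ → G) → A, DependsOn Q (Set.Iic (q + (q + 1) * M)) ∧ ∀ s ∈ S,
      cobd (q + (q + 1) * M) Q s =
        cupProd (q + 1) F s - cupProd (q + 1) (fun j => F j - cobd q (b j)) s := by
  induction M with
  | zero => exact ⟨b 0, by simpa using hb 0, fun s _ => by simp [cupProd]⟩
  | succ M ih =>
    obtain ⟨Q, hQ, hQS⟩ := ih (fun j => hF j.succ) (fun j => hb j.succ) fun j => hclosed j.succ
    have hdiff : DependsOn (F 0 - cobd q (b 0)) (Set.Iic (q + 1)) := fun s s' h =>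
      congrArg₂ (· - ·) (hF 0 h) (dependsOn_cobd (hb 0) h)
    have hP : DependsOn (cupProd (q + 1) fun j : Fin (M + 1) => F j.succ) _ :=
      dependsOn_cupProd fun j => hF j.succ
    have hdeg : q + (q + 1) * (M + 1) = q + 1 + (q + (q + 1) * M) := by ring
    refine ⟨cup q (b 0) (cupProd (q + 1) fun j => F j.succ) +
      (-1 : A) ^ (q + 1) • cup (q + 1) (F 0 - cobd q (b 0)) Q, fun s s' h => ?_, fun s hs => ?_⟩
    · exact congrArg₂ (· + ·) (dependsOn_cup (hb 0) hP h)
        (congrArg _ (dependsOn_cup hdiff hQ (hdeg ▸ h)))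
    · have hPS := cobd_cupProd_eq_zero hS (fun j => hF j.succ) (fun j => hclosed j.succ) _
        (hS s hs q)
      rw [map_add, map_smul, cobd_cup _ (hb 0), hdeg, cobd_cup _ hdiff, cupProd_succ _ F,
        cupProd_succ _ fun j => F j - cobd q (b j), map_sub, cobd_cobd, sub_zero]
      simp only [Pi.add_apply, Pi.smul_apply, Pi.sub_apply, cup, hPS, hclosed 0 s hs,
        hQS _ (hS s hs (q + 1)), smul_eq_mul]
      have hsign : ((-1 : A) ^ (q + 1)) * (-1) ^ (q + 1) = 1 := by rw [← mul_pow]; simp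
      linear_combination ((F 0 s - cobd q (b 0) s) *
        (cupProd (q + 1) (fun j => F j.succ) (fun k => s (k + (q + 1))) -
          cupProd (q + 1) (fun j => F j.succ - cobd q (b j.succ)) fun k => s (k + (q + 1)))) * hsign

end Along

end Cochains

section KuhnCycle

variable {ι R : Type*} [AddGroupWithOne R]

/-- The `k`-th vertex of the simplex of the Kuhn triangulation of `ι → R` that starts at `x` and
increases one coordinate at each step, in the order `τ`. Positions in this order are numbered by
`e : ι ≃ Fin d`, so that coordinate `τ a` increases in passing from vertex `e a` to `e a + 1`. -/
def kuhnPath {d : ℕ} (e : ι ≃ Fin d) (x : ι → R) (τ : Equiv.Perm ι) (k : ℕ) : ι → R :=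
  fun i => x i + if (e (τ.symm i) : ℕ) < k then 1 else 0

theorem kuhnPath_succ_apply_of_ne {d : ℕ} (e : ι ≃ Fin d) (x : ι → R) {τ : Equiv.Perm ι}
    {a i : ι} (hi : i ≠ τ a) : kuhnPath e x τ (e a + 1) i = kuhnPath e x τ (e a) i := by
  have hne : e (τ.symm i) ≠ e a := e.injective.ne fun h => hi ((τ.symm_apply_eq).mp h)
  have hiff : (e (τ.symm i) : ℕ) < e a + 1 ↔ (e (τ.symm i) : ℕ) < e a := by
    have := Fin.val_ne_of_ne hne
    omega
  simp only [kuhnPath, hiff]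

variable [DecidableEq ι]

theorem kuhnPath_mul_swap_comp_skipIndex {d : ℕ} (e : ι ≃ Fin d) (x : ι → R)
    (τ : Equiv.Perm ι) {a b : ι} (hab : (e b : ℕ) = e a + 1) :
    kuhnPath e x (τ * Equiv.swap a b) ∘ skipIndex (e b) = kuhnPath e x τ ∘ skipIndex (e b) := by
  have hiff {k : ℕ} (hk : k ≠ e b) (c : ι) : (e (Equiv.swap a b c) : ℕ) < k ↔ (e c : ℕ) < k := by
    rw [Equiv.swap_apply_def]
    split_ifs with ha hb
    · subst ha; omega
    · subst hb; omega
    · rfl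
  funext k j
  have hk : skipIndex (e b) k ≠ e b := by
    unfold skipIndex
    split_ifs <;> omega
  simp only [Function.comp_apply, kuhnPath, Equiv.Perm.mul_def, Equiv.symm_trans_apply,
    Equiv.symm_swap, hiff hk]

theorem kuhnPath_comp_skipIndex_zero {n k : ℕ} (e : ι ≃ Fin (n + 1)) (x : ι → R)
    (τ : Equiv.Perm ι) (hk : k ≤ n) :
    (kuhnPath e x τ ∘ skipIndex 0) k =
      kuhnPath e (x + Pi.single (τ (e.symm 0)) 1) (τ * e.symm.permCongr (finRotate (n + 1))) k := by
  funext j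
  obtain ⟨a, rfl⟩ := τ.surjective j
  obtain ⟨c, rfl⟩ := e.symm.surjective a
  obtain ⟨b, rfl⟩ := (finRotate (n + 1)).surjective c
  have hinv : (τ * e.symm.permCongr (finRotate (n + 1))).symm
      (τ (e.symm (finRotate (n + 1) b))) = e.symm b := by
    rw [Equiv.symm_apply_eq]
    simp [Equiv.permCongr_apply]
  simp only [Function.comp_apply, skipIndex_of_le (Nat.zero_le k), kuhnPath, hinv, Pi.add_apply,
    Pi.single_apply, τ.injective.eq_iff, Equiv.symm_apply_apply, Equiv.apply_symm_apply,
    e.symm.injective.eq_iff]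
  rcases eq_or_ne b (Fin.last n) with rfl | hb
  · simp [hk]
  · have hval : (finRotate (n + 1) b : ℕ) = b + 1 := coe_finRotate_of_ne_last hb
    have hne : finRotate (n + 1) b ≠ 0 := Fin.ne_of_val_ne (by rw [hval]; exact Nat.succ_ne_zero b)
    simp only [hval, hne, if_false, add_zero, add_lt_add_iff_right]

variable [Fintype ι] [Fintype R]

/-- Evaluation of cochains of degree `d` on the fundamental cycle of the Kuhn triangulation of the
torus `ι → R`, where `R = ℤ/N` and `d = |ι|`. -/
def kuhnSum {d : ℕ} (e : ι ≃ Fin d) : ((ℕ → ι → R) → ℤ) →ₗ[ℤ] ℤ where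
  toFun F := ∑ x, ∑ τ : Equiv.Perm ι, (Equiv.Perm.sign τ : ℤ) * F (kuhnPath e x τ)
  map_add' F H := by simp only [Pi.add_apply, mul_add, Finset.sum_add_distrib]
  map_smul' a F := by
    simp only [Pi.smul_apply, smul_eq_mul, eq_intCast, Int.cast_id, Finset.mul_sum, mul_left_comm]

theorem kuhnSum_apply {d : ℕ} (e : ι ≃ Fin d) (F : (ℕ → ι → R) → ℤ) :
    kuhnSum e F = ∑ x, ∑ τ : Equiv.Perm ι, (Equiv.Perm.sign τ : ℤ) * F (kuhnPath e x τ) := rfl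

theorem kuhnSum_comp_skipIndex_of_adjacent {d : ℕ} (e : ι ≃ Fin d) (F : (ℕ → ι → R) → ℤ)
    {a b : ι} (hab : (e b : ℕ) = e a + 1) : kuhnSum e (fun s => F (s ∘ skipIndex (e b))) = 0 := by
  have hne : a ≠ b := fun h => by simp [h] at hab
  refine Finset.sum_eq_zero fun x _ => self_eq_neg.mp ?_
  rw [← Finset.sum_neg_distrib]
  refine Fintype.sum_equiv (Equiv.mulRight (Equiv.swap a b)) _ _ fun τ => ?_
  simp only [Equiv.coe_mulRight, kuhnPath_mul_swap_comp_skipIndex e x τ hab]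
  rw [map_mul, Equiv.Perm.sign_swap hne, mul_neg_one, Units.val_neg, neg_mul, neg_neg]

theorem kuhnSum_comp_skipIndex_zero {n : ℕ} (e : ι ≃ Fin (n + 1)) {F : (ℕ → ι → R) → ℤ}
    (hF : DependsOn F (Set.Iic n)) :
    kuhnSum e (fun s => F (s ∘ skipIndex 0)) = (-1) ^ n * kuhnSum e F := by
  set ρ := e.symm.permCongr (finRotate (n + 1)) with hρ
  have hsign : (Equiv.Perm.sign ρ : ℤ) = (-1) ^ n := by
    simp [hρ, Equiv.Perm.sign_permCongr, sign_finRotate]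
  have hface (x : ι → R) (τ : Equiv.Perm ι) : F (kuhnPath e x τ ∘ skipIndex 0) =
      F (kuhnPath e (x + Pi.single (τ (e.symm 0)) 1) (τ * ρ)) :=
    hF fun k hk => kuhnPath_comp_skipIndex_zero e x τ hk
  simp only [kuhnSum_apply, hface]
  rw [Finset.sum_comm, Finset.sum_comm (s := Finset.univ (α := ι → R)), Finset.mul_sum]
  refine Fintype.sum_equiv (Equiv.mulRight ρ) _ _ fun τ => ?_
  rw [Equiv.coe_mulRight, Finset.mul_sum]
  refine Fintype.sum_equiv (Equiv.addRight (Pi.single (τ (e.symm 0)) 1)) _ _ fun x => ?_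
  rw [map_mul, Units.val_mul, hsign, Equiv.coe_addRight]
  have hsq : ((-1 : ℤ) ^ n) * (-1) ^ n = 1 := by rw [← mul_pow]; simp
  linear_combination -(Equiv.Perm.sign τ : ℤ) *
    F (kuhnPath e (x + Pi.single (τ (e.symm 0)) 1) (τ * ρ)) * hsq

/-- In the boundary of the Kuhn cycle, the inner faces cancel in pairs under an adjacent
transposition, and the first face of each simplex is the last face of a rotated one. -/
theorem kuhnSum_cobd {d n : ℕ} (e : ι ≃ Fin d) (hd : n + 1 = d) {F : (ℕ → ι → R) → ℤ}
    (hF : DependsOn F (Set.Iic n)) : kuhnSum e (cobd n F) = 0 := by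
  subst hd
  have hcobd : cobd n F =
      ∑ i ∈ Finset.range (n + 2), (-1 : ℤ) ^ i • fun s => F (s ∘ skipIndex i) := by
    funext s
    simp only [cobd_apply, Finset.sum_apply, Pi.smul_apply, smul_eq_mul]
  have hlast : (fun s => F (s ∘ skipIndex (n + 1))) = F := by
    funext s
    exact hF fun k hk => congrArg s (skipIndex_of_lt (Nat.lt_succ_of_le hk))
  have hmiddle : ∑ i ∈ Finset.range n,
      (-1 : ℤ) ^ (i + 1) * kuhnSum e (fun s => F (s ∘ skipIndex (i + 1))) = 0 :=
    Finset.sum_eq_zero fun i hi => by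
      have hi : i < n := Finset.mem_range.mp hi
      have hzero := kuhnSum_comp_skipIndex_of_adjacent e F (a := e.symm ⟨i, by omega⟩)
        (b := e.symm ⟨i + 1, by omega⟩) (by simp only [e.apply_symm_apply])
      simp only [e.apply_symm_apply] at hzero
      rw [hzero, mul_zero]
  simp only [hcobd, map_sum, map_smul, smul_eq_mul]
  rw [Finset.sum_range_succ, Finset.sum_range_succ', hmiddle, hlast,
    kuhnSum_comp_skipIndex_zero e hF]
  ring

end KuhnCycle

section Kunneth

variable {T R : Type*}

/-- The pullback to the torus `T × Fin p → R` of a cochain on its factor `Fin p → R` at `t : T`. -/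
def factorCochain {p : ℕ} (φ : (ℕ → Fin p → R) → ℤ) (t : T) (s : ℕ → T × Fin p → R) : ℤ :=
  φ fun k => Function.curry (s k) t

/-- A cochain of degree `p` is normalized if it vanishes on degenerate simplices. -/
def IsNormalized {G A : Type*} [Zero A] (p : ℕ) (F : (ℕ → G) → A) : Prop :=
  ∀ s k, k < p → s k = s (k + 1) → F s = 0

/-- The lexicographic numbering of `T × Fin p`, given a numbering of `T`. -/
def blockOrder {M : ℕ} (e : T ≃ Fin M) (p : ℕ) : T × Fin p ≃ Fin (M * p) :=
  (e.prodCongr (Equiv.refl _)).trans finProdFinEquiv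

theorem val_blockOrder {M p : ℕ} (e : T ≃ Fin M) (a : T) (i : Fin p) :
    (blockOrder e p (a, i) : ℕ) = i + p * e a := rfl

/-- The permutation of `T × Fin p` that permutes the blocks by `w` and the inside of block `a`
by `κ a`. -/
def blockPerm {p : ℕ} (w : Equiv.Perm T) (κ : T → Equiv.Perm (Fin p)) : Equiv.Perm (T × Fin p) :=
  (Equiv.prodCongrRight κ).trans (Equiv.prodCongrLeft fun _ => w)

theorem blockPerm_apply {p : ℕ} (w : Equiv.Perm T) (κ : T → Equiv.Perm (Fin p)) (a : T)
    (i : Fin p) : blockPerm w κ (a, i) = (w a, κ a i) := rfl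

theorem blockPerm_injective {p : ℕ} (w : Equiv.Perm T) :
    Function.Injective (blockPerm (p := p) w) := fun _ _ h =>
  funext fun a => Equiv.ext fun i => congrArg Prod.snd (Equiv.congr_fun h (a, i))

theorem exists_blockPerm_eq {p : ℕ} {w : Equiv.Perm T} {τ : Equiv.Perm (T × Fin p)}
    (h : ∀ a i, (τ (a, i)).1 = w a) : ∃ κ, blockPerm w κ = τ := by
  have hinj (a : T) : Function.Injective fun i => (τ (a, i)).2 := fun i j hij =>
    congrArg Prod.snd (τ.injective (Prod.ext ((h a i).trans (h a j).symm) hij))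
  refine ⟨fun a => Equiv.ofBijective _ (Finite.injective_iff_bijective.mp (hinj a)), ?_⟩
  ext ⟨a, i⟩ <;> simp [blockPerm_apply, h]

theorem sign_blockPerm [Fintype T] [DecidableEq T] {p : ℕ} (w : Equiv.Perm T)
    (κ : T → Equiv.Perm (Fin p)) :
    Equiv.Perm.sign (blockPerm w κ) = Equiv.Perm.sign w ^ p * ∏ a, Equiv.Perm.sign (κ a) := by
  rw [blockPerm, Equiv.Perm.sign_trans, Equiv.Perm.sign_prodCongrRight,
    Equiv.Perm.sign_prodCongrLeft, Finset.prod_const, Finset.card_univ, Fintype.card_fin]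

variable [AddGroupWithOne R]

theorem curry_kuhnPath_blockPerm {M p : ℕ} (e : T ≃ Fin M) (x : T × Fin p → R)
    (w : Equiv.Perm T) (κ : T → Equiv.Perm (Fin p)) (a : T) (k : ℕ) :
    Function.curry (kuhnPath (blockOrder e p) x (blockPerm w κ) (k + p * e a)) (w a) =
      kuhnPath (Equiv.refl _) (Function.curry x (w a)) (κ a) k := by
  funext i
  obtain ⟨i, rfl⟩ := (κ a).surjective i
  simp only [Function.curry_apply, kuhnPath, ← blockPerm_apply, Equiv.symm_apply_apply,
    val_blockOrder, add_lt_add_iff_right, Equiv.refl_apply]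

theorem fst_eq_of_factorCochain_ne_zero {M p : ℕ} {φ : (ℕ → Fin p → R) → ℤ}
    (hφ : IsNormalized p φ) (e : T ≃ Fin M) {x : T × Fin p → R} {τ : Equiv.Perm (T × Fin p)}
    {a t : T} (h : factorCochain φ t (fun k => kuhnPath (blockOrder e p) x τ (k + p * e a)) ≠ 0)
    (i : Fin p) : (τ (a, i)).1 = t := by
  by_contra hne
  refine h (hφ _ i i.2 ?_)
  funext j
  have hj : (t, j) ≠ τ (a, i) := fun hj => hne (congrArg Prod.fst hj).symm
  have hstep := kuhnPath_succ_apply_of_ne (blockOrder e p) x hj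
  rw [val_blockOrder, add_right_comm] at hstep
  exact hstep.symm

variable [DecidableEq T] [Fintype T] [Fintype R]

theorem kuhnSum_cupProd_factorCochain {M p : ℕ} {φ : T → (ℕ → Fin p → R) → ℤ}
    (hφ : ∀ t, IsNormalized p (φ t)) (e : T ≃ Fin M) (w : Equiv.Perm T) :
    kuhnSum (blockOrder e p)
        (cupProd p fun j => factorCochain (φ (w (e.symm j))) (w (e.symm j))) =
      (Equiv.Perm.sign w : ℤ) ^ p * ∏ t, kuhnSum (Equiv.refl (Fin p)) (φ t) := by
  have hprod (s : ℕ → T × Fin p → R) :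
      cupProd p (fun j => factorCochain (φ (w (e.symm j))) (w (e.symm j))) s =
        ∏ a, factorCochain (φ (w a)) (w a) fun k => s (k + p * e a) := by
    rw [cupProd, ← Equiv.prod_comp e]
    simp only [e.symm_apply_apply]
  have hterm (x : T × Fin p → R) :
      ∑ τ : Equiv.Perm (T × Fin p), (Equiv.Perm.sign τ : ℤ) *
        ∏ a, factorCochain (φ (w a)) (w a) (fun k => kuhnPath (blockOrder e p) x τ (k + p * e a)) =
      ∑ κ : T → Equiv.Perm (Fin p), (Equiv.Perm.sign w : ℤ) ^ p * ∏ a, (Equiv.Perm.sign (κ a) : ℤ) *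
        φ (w a) (kuhnPath (Equiv.refl _) (Function.curry x (w a)) (κ a)) := by
    symm
    refine Fintype.sum_of_injective _ (blockPerm_injective w) _ _ (fun τ hτ => ?_) fun κ => ?_
    · by_contra hne
      exact hτ (exists_blockPerm_eq fun a i => fst_eq_of_factorCochain_ne_zero (hφ (w a)) e
        (Finset.prod_ne_zero_iff.mp (right_ne_zero_of_mul hne) a (Finset.mem_univ a)) i)
    · simp only [factorCochain, curry_kuhnPath_blockPerm, sign_blockPerm, Finset.prod_mul_distrib]
      push_cast
      ring
  simp only [kuhnSum_apply, hprod, hterm, ← Finset.mul_sum]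
  congr 1
  rw [Finset.prod_univ_sum, Fintype.piFinset_univ]
  refine Fintype.sum_equiv (Equiv.curry T (Fin p) R) _ _ fun x => ?_
  rw [← Equiv.prod_comp w, Finset.prod_univ_sum, Fintype.piFinset_univ]
  rfl

theorem kuhnSum_cupProd_factorCochain_of_not_surjective {M p : ℕ} (hp : 0 < p)
    {φ : T → (ℕ → Fin p → R) → ℤ} (hφ : ∀ t, IsNormalized p (φ t)) (e : T ≃ Fin M)
    {v : Fin M → T} (hv : ¬ Function.Surjective v) :
    kuhnSum (blockOrder e p) (cupProd p fun j => factorCochain (φ (v j)) (v j)) = 0 := by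
  obtain ⟨t, ht⟩ := not_forall.mp hv
  refine Finset.sum_eq_zero fun x _ => Finset.sum_eq_zero fun τ _ => mul_eq_zero_of_right _ ?_
  obtain ⟨⟨a, i⟩, hτ⟩ := τ.surjective (t, ⟨0, hp⟩)
  refine Finset.prod_eq_zero (Finset.mem_univ (e a)) (by_contra fun hne => ht ⟨e a, ?_⟩)
  rw [← fst_eq_of_factorCochain_ne_zero (hφ (v (e a))) e hne i, hτ]

/-- The product of `M` copies of a sum over the `M` factors of the torus picks each factor once,
in one of `M!` orders; blocks of even length are reordered with sign `1`. -/
theorem kuhnSum_cupProd_sum_factorCochain {M p : ℕ} (hp : 0 < p) (hp_even : Even p)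
    {φ : T → (ℕ → Fin p → R) → ℤ} (hφ : ∀ t, IsNormalized p (φ t)) (e : T ≃ Fin M) :
    kuhnSum (blockOrder e p) (cupProd p fun _ : Fin M => ∑ t, factorCochain (φ t) t) =
      M.factorial * ∏ t, kuhnSum (Equiv.refl (Fin p)) (φ t) := by
  have hzero (v : Fin M → T) (hv : v ∉ Set.range fun w : Equiv.Perm T => w ∘ e.symm) :
      kuhnSum (blockOrder e p) (cupProd p fun j => factorCochain (φ (v j)) (v j)) = 0 := by
    refine kuhnSum_cupProd_factorCochain_of_not_surjective hp hφ e fun hsurj => hv ?_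
    have hbij : Function.Bijective (v ∘ e) :=
      Finite.surjective_iff_bijective.mp (hsurj.comp e.surjective)
    exact ⟨Equiv.ofBijective _ hbij, funext fun j => by simp⟩
  have hone (w : Equiv.Perm T) : (∏ t, kuhnSum (Equiv.refl (Fin p)) (φ t)) =
      kuhnSum (blockOrder e p)
        (cupProd p fun j => factorCochain (φ (w (e.symm j))) (w (e.symm j))) := by
    rw [kuhnSum_cupProd_factorCochain hφ]
    rcases Int.units_eq_one_or (Equiv.Perm.sign w) with hw | hw <;> simp [hw, hp_even.neg_one_pow]
  rw [cupProd_sum, map_sum, ← Fintype.sum_of_injective (fun w : Equiv.Perm T => w ∘ e.symm)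
    (fun w w' h => Equiv.coe_fn_injective (e.symm.surjective.injective_comp_right h))
    _ _ hzero hone, Finset.sum_const, Finset.card_univ, Fintype.card_perm, Fintype.card_congr e,
    Fintype.card_fin, nsmul_eq_mul]

end Kunneth

section TorusCover

variable {T R : Type*} [Fintype T] [AddGroupWithOne R] [Fintype R]

/-- If a class on the torus `T × Fin (q + 1) → R` is a coboundary on each member of a cover by `|T|`
sets, then its `|T|`-th power vanishes. -/
theorem prod_kuhnSum_eq_zero {M q : ℕ} (hq : Even (q + 1)) (e : T ≃ Fin M)
    {φ : T → (ℕ → Fin (q + 1) → R) → ℤ} (hφ : ∀ t, IsNormalized (q + 1) (φ t))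
    (hφ_dep : ∀ t, DependsOn (φ t) (Set.Iic (q + 1)))
    {b : Fin M → (ℕ → T × Fin (q + 1) → R) → ℤ} (hb : ∀ j, DependsOn (b j) (Set.Iic q))
    (hcover : ∀ x τ, ∃ j, ∀ s, (∀ k, s k ∈ Set.range (kuhnPath (blockOrder e (q + 1)) x τ)) →
      (∑ t, factorCochain (φ t) t) s = cobd q (b j) s) :
    ∏ t, kuhnSum (Equiv.refl (Fin (q + 1))) (φ t) = 0 := by
  classical
  obtain - | M := M
  · exact (hcover 0 1).choose.elim0
  set F := ∑ t, factorCochain (φ t) t with hF_def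
  set S := {s : ℕ → T × Fin (q + 1) → R |
    ∃ x τ, ∀ k, s k ∈ Set.range (kuhnPath (blockOrder e (q + 1)) x τ)}
  have hF : DependsOn F (Set.Iic (q + 1)) := fun s s' h => by
    simp only [hF_def, Finset.sum_apply]
    exact Finset.sum_congr rfl fun t _ =>
      hφ_dep t fun k hk => congrArg (Function.curry · t) (h k hk)
  have hF_closed : ∀ s ∈ S, cobd (q + 1) F s = 0 := by
    rintro s ⟨x, τ, hs⟩
    obtain ⟨j, hj⟩ := hcover x τ
    refine Eq.trans ?_ (congrFun (cobd_cobd q (b j)) s)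
    rw [cobd_apply, cobd_apply]
    exact Finset.sum_congr rfl fun i _ => congrArg _ (hj _ fun k => hs _)
  have hS_shift : ∀ s ∈ S, ∀ k, (fun i => s (i + k)) ∈ S :=
    fun s ⟨x, τ, hs⟩ k => ⟨x, τ, fun i => hs (i + k)⟩
  obtain ⟨Q, hQ, hQS⟩ := exists_cobd_eq_cupProd_sub hS_shift (fun _ : Fin (M + 1) => hF) hb
    fun _ => hF_closed
  have hdeg : q + (q + 1) * M + 1 = (M + 1) * (q + 1) := by ring
  have hpower : kuhnSum (blockOrder e (q + 1)) (cupProd (q + 1) fun _ : Fin (M + 1) => F) = 0 := by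
    rw [← kuhnSum_cobd (blockOrder e (q + 1)) hdeg hQ, kuhnSum_apply, kuhnSum_apply]
    refine Finset.sum_congr rfl fun x _ => Finset.sum_congr rfl fun τ _ => ?_
    obtain ⟨j, hj⟩ := hcover x τ
    have hzero : cupProd (q + 1) (fun j => F - cobd q (b j)) (kuhnPath (blockOrder e (q + 1)) x τ) =
        0 := Finset.prod_eq_zero (Finset.mem_univ j)
      (sub_eq_zero.mpr (hj _ fun k => Set.mem_range_self _))
    rw [hQS _ ⟨x, τ, fun k => Set.mem_range_self k⟩, hzero, sub_zero]
  rw [hF_def, kuhnSum_cupProd_sum_factorCochain q.succ_pos hq hφ] at hpower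
  exact (mul_eq_zero.mp hpower).resolve_left (Nat.cast_ne_zero.mpr (Nat.factorial_ne_zero _))

end TorusCover

section Labelings

/-- The orientation of the triangle with vertices `0`, `1`, `2` in the boundary of the tetrahedron
with vertex set `Fin 4`: a cocycle that represents the fundamental class. -/
def faceSign (a b c : Fin 4) : ℤ :=
  if (a, b, c) ∈ [(0, 1, 2), (1, 2, 0), (2, 0, 1)] then 1
  else if (a, b, c) ∈ [(0, 2, 1), (2, 1, 0), (1, 0, 2)] then -1 else 0

theorem faceSign_self_left (a b : Fin 4) : faceSign a a b = 0 := by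
  revert a b; decide

theorem faceSign_self_right (a b : Fin 4) : faceSign a b b = 0 := by
  revert a b; decide

theorem faceSign_eq_zero_of_ne {m a b c : Fin 4} (hm : m ≠ 3) (ha : a ≠ m) (hb : b ≠ m)
    (hc : c ≠ m) : faceSign a b c = 0 := by
  revert m a b c; decide

theorem faceSign_closed {m a b c d : Fin 4} (ha : a ≠ m) (hb : b ≠ m) (hc : c ≠ m) (hd : d ≠ m) :
    faceSign b c d - faceSign a c d + faceSign a b d - faceSign a b c = 0 := by
  revert m a b c d; decide

variable {G : Type*}

/-- The pullback of the fundamental cocycle of the boundary of the tetrahedron under a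
labeling of vertices. -/
def labelCochain (L : G → Fin 4) (s : ℕ → G) : ℤ := faceSign (L (s 0)) (L (s 1)) (L (s 2))

theorem dependsOn_labelCochain (L : G → Fin 4) : DependsOn (labelCochain L) (Set.Iic 2) := by
  intro s s' h
  rw [labelCochain, labelCochain, h 0 (by simp), h 1 (by simp), h 2 (by simp)]

theorem isNormalized_labelCochain (L : G → Fin 4) : IsNormalized 2 (labelCochain L) := by
  intro s k hk hs
  interval_cases k
  · rw [labelCochain, hs, faceSign_self_left]
  · rw [labelCochain, hs, faceSign_self_right]

/-- The prism operator: the cochain of degree `1` whose coboundary is the difference of the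
pullbacks under two labelings. -/
def labelPrism (L L' : G → Fin 4) (s : ℕ → G) : ℤ :=
  faceSign (L (s 0)) (L' (s 0)) (L' (s 1)) - faceSign (L (s 0)) (L (s 1)) (L' (s 1))

theorem dependsOn_labelPrism (L L' : G → Fin 4) : DependsOn (labelPrism L L') (Set.Iic 1) := by
  intro s s' h
  rw [labelPrism, labelPrism, h 0 (by simp), h 1 (by simp)]

theorem cobd_labelPrism {L L' : G → Fin 4} {s : ℕ → G} {m : Fin 4} (hL : ∀ k, L (s k) ≠ m)
    (hL' : ∀ k, L' (s k) ≠ m) :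
    cobd 1 (labelPrism L L') s = labelCochain L' s - labelCochain L s := by
  have h₁ := faceSign_closed (hL 0) (hL 1) (hL 2) (hL' 2)
  have h₂ := faceSign_closed (hL 0) (hL 1) (hL' 1) (hL' 2)
  have h₃ := faceSign_closed (hL 0) (hL' 0) (hL' 1) (hL' 2)
  have hcobd : cobd 1 (labelPrism L L') s = labelPrism L L' (s ∘ skipIndex 0) -
      labelPrism L L' (s ∘ skipIndex 1) + labelPrism L L' (s ∘ skipIndex 2) := by
    simp [cobd_apply, Finset.sum_range_succ, sub_eq_add_neg]
  rw [hcobd]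
  change (faceSign (L (s 1)) (L' (s 1)) (L' (s 2)) - faceSign (L (s 1)) (L (s 2)) (L' (s 2))) -
      (faceSign (L (s 0)) (L' (s 0)) (L' (s 2)) - faceSign (L (s 0)) (L (s 2)) (L' (s 2))) +
      (faceSign (L (s 0)) (L' (s 0)) (L' (s 1)) - faceSign (L (s 0)) (L (s 1)) (L' (s 1))) =
    faceSign (L' (s 0)) (L' (s 1)) (L' (s 2)) - faceSign (L (s 0)) (L (s 1)) (L (s 2))
  linear_combination h₂ - h₁ - h₃

theorem cobd_sum_labelPrism {n : ℕ} {L : ℕ → G → Fin 4} {s : ℕ → G}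
    (hL : ∀ k < n, ∃ m, ∀ r, L k (s r) ≠ m ∧ L (k + 1) (s r) ≠ m) :
    cobd 1 (∑ k ∈ Finset.range n, labelPrism (L k) (L (k + 1))) s =
      labelCochain (L n) s - labelCochain (L 0) s := by
  rw [map_sum, Finset.sum_apply, ← Finset.sum_range_sub fun k => labelCochain (L k) s]
  refine Finset.sum_congr rfl fun k hk => ?_
  obtain ⟨m, hm⟩ := hL k (Finset.mem_range.mp hk)
  exact cobd_labelPrism (fun r => (hm r).1) fun r => (hm r).2

/-- Pull a labeling `lab` of the `2`-torus back to the torus `(I × Fin 2) × Fin 2 → R` along its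
projections. If over each member of a cover by `2 |I|` sets the pullbacks along the projections
`(i, 0)` and `(i, 1)` are homotopic for all `i`, then `lab` has degree zero. -/
theorem kuhnSum_labelCochain_eq_zero {I R : Type*} [Finite I] [AddGroupWithOne R] [Fintype R]
    {M n : ℕ} (e : I × Fin 2 ≃ Fin M) {lab : (Fin 2 → R) → Fin 4}
    (L : Fin M → I → ℕ → ((I × Fin 2) × Fin 2 → R) → Fin 4)
    (hL_zero : ∀ j i g, L j i 0 g = lab (Function.curry g (i, 0)))
    (hL_last : ∀ j i g, L j i n g = lab (Function.curry g (i, 1)))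
    (hL : ∀ x τ, ∃ j, ∀ i, ∀ k < n, ∃ m, ∀ g ∈ Set.range (kuhnPath (blockOrder e 2) x τ),
      L j i k g ≠ m ∧ L j i (k + 1) g ≠ m) :
    kuhnSum (Equiv.refl (Fin 2)) (labelCochain lab) = 0 := by
  cases nonempty_fintype I
  have hprod : ∏ t : I × Fin 2, kuhnSum (Equiv.refl (Fin 2))
      ((-1 : ℤ) ^ (t.2 : ℕ) • labelCochain lab) = 0 := by
    refine prod_kuhnSum_eq_zero even_two e
      (b := fun j => -∑ i, ∑ k ∈ Finset.range n, labelPrism (L j i k) (L j i (k + 1)))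
      (fun t s k hk hs => ?_) (fun t s s' h => ?_) (fun j s s' h => ?_) fun x τ => ?_
    · rw [Pi.smul_apply, isNormalized_labelCochain lab s k hk hs, smul_zero]
    · exact congrArg ((-1 : ℤ) ^ (t.2 : ℕ) • ·) (dependsOn_labelCochain lab h)
    · simp only [Pi.neg_apply, Finset.sum_apply, dependsOn_labelPrism _ _ h]
    · obtain ⟨j, hj⟩ := hL x τ
      refine ⟨j, fun s hs => ?_⟩
      rw [map_neg, map_sum, Pi.neg_apply, Finset.sum_apply, Finset.sum_apply,
        Fintype.sum_prod_type, ← Finset.sum_neg_distrib]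
      refine Finset.sum_congr rfl fun i _ => ?_
      rw [cobd_sum_labelPrism fun k hk => (hj i k hk).imp fun m hm r => hm _ (hs r)]
      simp only [Fin.sum_univ_two, Pi.smul_apply, smul_eq_mul, factorCochain, labelCochain, hL_zero,
        hL_last, Fin.val_zero, Fin.val_one]
      ring
  obtain ⟨t, -, ht⟩ := Finset.prod_eq_zero_iff.mp hprod
  rw [map_smul, smul_eq_mul] at ht
  exact (mul_eq_zero.mp ht).resolve_left (pow_ne_zero _ (by norm_num))

end Labelings

section StairLabel

variable {R : Type*} [AddGroupWithOne R]

/-- The labeling of the grid `Fin 2 → R` in the `2`-torus with label sets `{x ∈ P}`,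
`{x ∉ P, y ∈ P}`, `{x, y ∉ P} ∩ Q` and the rest, for points `(x, y)`. -/
def stairLabel (P : R → Prop) [DecidablePred P] (Q : R → R → Prop) [DecidableRel Q]
    (g : Fin 2 → R) : Fin 4 :=
  if P (g 0) then 0 else if P (g 1) then 1 else if Q (g 0) (g 1) then 2 else 3

variable {P : R → Prop} [DecidablePred P] {Q : R → R → Prop} [DecidableRel Q]

theorem faceSign_stairLabel_lower
    (hQ : ∀ a, P a → ¬ P (a + 1) → ∀ b, ¬ Q (a + 1) b) (a b : R) :
    faceSign (stairLabel P Q ![a, b]) (stairLabel P Q ![a + 1, b])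
      (stairLabel P Q ![a + 1, b + 1]) = 0 := by
  simp only [stairLabel, Matrix.cons_val_zero, Matrix.cons_val_one]
  by_cases ha' : P (a + 1)
  · simp only [ha', if_true, faceSign_self_right]
  by_cases ha : P a
  · simp only [ha, ha', hQ a ha ha', if_true, if_false]
    refine faceSign_eq_zero_of_ne (m := 2) (by decide) ?_ ?_ ?_ <;> grind
  · simp only [ha, ha', if_false]
    refine faceSign_eq_zero_of_ne (m := 0) (by decide) ?_ ?_ ?_ <;> grind

theorem faceSign_stairLabel_upper [DecidableEq R] (hP_zero : ¬ P 0) (hP_one : P 1)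
    (hP : ∀ a, ¬ P a → P (a + 1) → a = 0) (hQ_zero : Q 0 0)
    (hQ : ∀ b, P b → ¬ P (b + 1) → ¬ Q 0 (b + 1)) (a b : R) :
    faceSign (stairLabel P Q ![a, b]) (stairLabel P Q ![a, b + 1])
      (stairLabel P Q ![a + 1, b + 1]) = if a = 0 ∧ b = 0 then -1 else 0 := by
  simp only [stairLabel, Matrix.cons_val_zero, Matrix.cons_val_one]
  by_cases ha : P a
  · have ha_ne : a ≠ 0 := by rintro rfl; exact hP_zero ha
    simp only [ha, ha_ne, false_and, if_true, if_false, faceSign_self_left]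
  by_cases ha' : P (a + 1)
  swap
  · have ha_ne : a ≠ 0 := by rintro rfl; exact ha' (by rwa [zero_add])
    simp only [ha, ha', ha_ne, false_and, if_false]
    refine faceSign_eq_zero_of_ne (m := 0) (by decide) ?_ ?_ ?_ <;> grind
  obtain rfl := hP a ha ha'
  by_cases hb : P b <;> by_cases hb' : P (b + 1)
  · have hb_ne : b ≠ 0 := by rintro rfl; exact hP_zero hb
    simp only [ha, hb, hb', hb_ne, and_false, if_true, if_false, faceSign_self_left]
  · have hb_ne : b ≠ 0 := by rintro rfl; exact hP_zero hb
    simp only [ha, ha', hb, hb', hb_ne, hQ b hb hb', and_false, if_true, if_false]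
    decide
  · obtain rfl := hP b hb hb'
    simp only [ha, ha', hQ_zero, and_self, if_true, if_false]
    decide
  · have hb_ne : b ≠ 0 := by rintro rfl; exact hb' (by rwa [zero_add])
    simp only [ha, ha', hb, hb', hb_ne, and_false, if_true, if_false]
    refine faceSign_eq_zero_of_ne (m := 1) (by decide) ?_ ?_ ?_ <;> grind

theorem kuhnSum_refl_two [Fintype R] (F : (ℕ → Fin 2 → R) → ℤ) :
    kuhnSum (Equiv.refl (Fin 2)) F = ∑ a, ∑ b,
      (F (kuhnPath (Equiv.refl _) ![a, b] 1) -
        F (kuhnPath (Equiv.refl _) ![a, b] (Equiv.swap 0 1))) := by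
  have hperm : (Finset.univ : Finset (Equiv.Perm (Fin 2))) = {1, Equiv.swap 0 1} := by decide
  rw [kuhnSum_apply, ← (finTwoArrowEquiv R).symm.sum_comp, Fintype.sum_prod_type]
  refine Finset.sum_congr rfl fun a _ => Finset.sum_congr rfl fun b _ => ?_
  rw [hperm, Finset.sum_pair (by decide)]
  simp [sub_eq_add_neg]

theorem kuhnPath_refl_two_zero (a b : R) (τ : Equiv.Perm (Fin 2)) :
    kuhnPath (Equiv.refl (Fin 2)) ![a, b] τ 0 = ![a, b] := by
  ext i; fin_cases i <;> simp [kuhnPath]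

theorem kuhnPath_refl_two_one_one (a b : R) :
    kuhnPath (Equiv.refl (Fin 2)) ![a, b] 1 1 = ![a + 1, b] := by
  ext i; fin_cases i <;> simp [kuhnPath, ← Equiv.Perm.inv_def]

theorem kuhnPath_refl_two_swap_one (a b : R) :
    kuhnPath (Equiv.refl (Fin 2)) ![a, b] (Equiv.swap 0 1) 1 = ![a, b + 1] := by
  ext i; fin_cases i <;> simp [kuhnPath]

theorem kuhnPath_refl_two_two (a b : R) (τ : Equiv.Perm (Fin 2)) :
    kuhnPath (Equiv.refl (Fin 2)) ![a, b] τ 2 = ![a + 1, b + 1] := by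
  have hlt (i : Fin 2) : (τ.symm i : ℕ) < 2 := (τ.symm i).is_lt
  ext i; fin_cases i <;> simp [kuhnPath, hlt]

theorem kuhnSum_labelCochain_stairLabel [Fintype R] (hP_zero : ¬ P 0) (hP_one : P 1)
    (hP : ∀ a, ¬ P a → P (a + 1) → a = 0) (hQ_zero : Q 0 0)
    (hQ_left : ∀ a, P a → ¬ P (a + 1) → ∀ b, ¬ Q (a + 1) b)
    (hQ_right : ∀ b, P b → ¬ P (b + 1) → ¬ Q 0 (b + 1)) :
    kuhnSum (Equiv.refl (Fin 2)) (labelCochain (stairLabel P Q)) = 1 := by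
  classical
  simp only [kuhnSum_refl_two, labelCochain, kuhnPath_refl_two_zero, kuhnPath_refl_two_one_one,
    kuhnPath_refl_two_swap_one, kuhnPath_refl_two_two, faceSign_stairLabel_lower hQ_left,
    faceSign_stairLabel_upper hP_zero hP_one hP hQ_zero hQ_right]
  simp [ite_and]

end StairLabel

open Filter Topology

section VectorLabel

/-- A labeling of the vectors of `ℝ³` for which the closures of the four label sets meet only at
the origin, so that it maps `ℝ³ ∖ {0}` to the boundary of the tetrahedron. -/
noncomputable def vectorLabel (v : Fin 3 → ℝ) : Fin 4 :=
  if 0 < v 0 then 0 else if 0 < v 1 then 1 else if 0 < v 2 then 2 else 3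

theorem vectorLabel_ne_three {v : Fin 3 → ℝ} {i : Fin 3} (hi : 0 < v i) : vectorLabel v ≠ 3 := by
  fin_cases i <;> grind [vectorLabel]

theorem vectorLabel_ne_castSucc {v : Fin 3 → ℝ} {i : Fin 3} (hi : v i ≤ 0) :
    vectorLabel v ≠ i.castSucc := by
  fin_cases i <;> grind [vectorLabel]

theorem vectorLabel_smul {c : ℝ} (hc : 0 < c) (v : Fin 3 → ℝ) :
    vectorLabel (c • v) = vectorLabel v := by
  simp only [vectorLabel, Pi.smul_apply, smul_eq_mul, mul_pos_iff_of_pos_left hc]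

theorem exists_eventually_vectorLabel_ne {v : Fin 3 → ℝ} (hv : v ≠ 0) :
    ∃ m, ∀ᶠ w in 𝓝 v, vectorLabel w ≠ m := by
  obtain ⟨i, hi⟩ := Function.ne_iff.mp hv
  have hcont : ContinuousAt (fun w : Fin 3 → ℝ => w i) v := (continuous_apply i).continuousAt
  rcases lt_or_gt_of_ne hi with hneg | hpos
  · exact ⟨i.castSucc, (hcont.eventually_lt_const hneg).mono
      fun w hw => vectorLabel_ne_castSucc hw.le⟩
  · exact ⟨3, (hcont.eventually_const_lt hpos).mono fun w hw => vectorLabel_ne_three hw⟩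

theorem eventually_forall_ball_vectorLabel_ne {X : Type*} [PseudoMetricSpace X] {K : Set X}
    (hK : IsCompact K) {v : X → Fin 3 → ℝ} (hv : ∀ z ∈ K, ContinuousAt v z)
    (hv_ne : ∀ z ∈ K, v z ≠ 0) :
    ∀ᶠ δ in 𝓝[>] (0 : ℝ), ∀ z ∈ K, ∃ m, ∀ w ∈ Metric.ball z δ, vectorLabel (v w) ≠ m := by
  obtain ⟨δ, hδ, hball⟩ := lebesgue_number_lemma_of_metric hK
    (c := fun m => interior {w | vectorLabel (v w) ≠ m}) (fun m => isOpen_interior) fun z hz => by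
      obtain ⟨m, hm⟩ := exists_eventually_vectorLabel_ne (hv_ne z hz)
      exact Set.mem_iUnion.mpr ⟨m, mem_interior_iff_mem_nhds.mpr ((hv z hz).eventually hm)⟩
  filter_upwards [Ioo_mem_nhdsGT hδ] with η hη z hz
  obtain ⟨m, hm⟩ := hball z hz
  exact ⟨m, fun w hw => interior_subset (hm (Metric.ball_subset_ball hη.2.le hw))⟩

end VectorLabel

section CircleGrid

open ZMod

variable {P : ℕ} [NeZero (2 * P)]

theorem toCircle_eq_exp_div_mul_pi (a : ZMod (2 * P)) :
    toCircle a = Circle.exp (a.val / P * Real.pi) := by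
  rw [toCircle_eq_circleExp]
  congr 1
  push_cast
  ring

theorem re_toCircle (a : ZMod (2 * P)) :
    (toCircle a : ℂ).re = Real.cos (a.val / P * Real.pi) := by
  rw [toCircle_eq_exp_div_mul_pi, Circle.coe_exp, Complex.exp_ofReal_mul_I_re]

theorem im_toCircle (a : ZMod (2 * P)) :
    (toCircle a : ℂ).im = Real.sin (a.val / P * Real.pi) := by
  rw [toCircle_eq_exp_div_mul_pi, Circle.coe_exp, Complex.exp_ofReal_mul_I_im]

theorem im_toCircle_pos_iff (a : ZMod (2 * P)) :
    0 < (toCircle a : ℂ).im ↔ 0 < a.val ∧ a.val < P := by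
  have hP : (0 : ℝ) < P := by exact_mod_cast pos_of_mul_pos_right (NeZero.pos (2 * P)) zero_le_two
  have hval : (a.val : ℝ) / P ≤ 2 := by
    rw [div_le_iff₀ hP]
    exact_mod_cast a.val_lt.le
  rw [im_toCircle]
  refine ⟨fun hpos => ⟨?_, ?_⟩, fun ⟨hpos, hlt⟩ => ?_⟩
  · refine Nat.pos_of_ne_zero fun hzero => hpos.ne' ?_
    rw [hzero, Nat.cast_zero, zero_div, zero_mul, Real.sin_zero]
  · by_contra! hle
    have hone : 1 ≤ (a.val : ℝ) / P := (one_le_div hP).mpr (by exact_mod_cast hle)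
    refine hpos.not_ge ?_
    rw [← Real.sin_sub_two_pi]
    exact Real.sin_nonpos_of_nonpos_of_neg_pi_le (by nlinarith [Real.pi_pos])
      (by nlinarith [Real.pi_pos])
  · have hone : (a.val : ℝ) / P < 1 := (div_lt_one hP).mpr (by exact_mod_cast hlt)
    exact Real.sin_pos_of_pos_of_lt_pi (by positivity) (by nlinarith [Real.pi_pos])

theorem val_add_one_two_mul (hP : 2 ≤ P) (a : ZMod (2 * P)) :
    (a + 1).val = if a.val + 1 = 2 * P then 0 else a.val + 1 := by
  have hlt := a.val_lt
  rw [val_add, val_one'' (by omega)]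
  split_ifs with h
  · rw [h, Nat.mod_self]
  · exact Nat.mod_eq_of_lt (by omega)

theorem im_toCircle_one_pos (hP : 2 ≤ P) : 0 < (toCircle (1 : ZMod (2 * P)) : ℂ).im := by
  rw [im_toCircle_pos_iff, val_one'' (by omega)]
  omega

theorem re_toCircle_add_one_eq_neg_one (hP : 2 ≤ P) {a : ZMod (2 * P)}
    (ha : 0 < (toCircle a : ℂ).im) (ha' : ¬ 0 < (toCircle (a + 1) : ℂ).im) :
    (toCircle (a + 1) : ℂ).re = -1 := by
  rw [im_toCircle_pos_iff] at ha ha'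
  have hval : (a + 1).val = P := by grind [val_add_one_two_mul hP a]
  have hP' : (P : ℝ) ≠ 0 := by norm_cast; omega
  rw [re_toCircle, hval, div_self hP', one_mul, Real.cos_pi]

theorem eq_zero_of_im_toCircle_add_one_pos (hP : 2 ≤ P) {a : ZMod (2 * P)}
    (ha : ¬ 0 < (toCircle a : ℂ).im) (ha' : 0 < (toCircle (a + 1) : ℂ).im) : a = 0 := by
  rw [im_toCircle_pos_iff] at ha ha'
  rw [← val_eq_zero]
  grind [val_add_one_two_mul hP a]

end CircleGrid

section TorusVector

/-- A map of degree one from the `2`-torus to `ℝ³ ∖ {0}`. -/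
noncomputable def torusVector (u : Fin 2 → Circle) : Fin 3 → ℝ :=
  ![(u 0 : ℂ).im, (u 1 : ℂ).im, (u 0 : ℂ).re + (u 1 : ℂ).re - 1]

theorem continuous_torusVector : Continuous torusVector := by
  unfold torusVector
  fun_prop

theorem torusVector_ne_zero (u : Fin 2 → Circle) : torusVector u ≠ 0 := by
  intro h
  have hre (i : Fin 2) (him : (u i : ℂ).im = 0) : (u i : ℂ).re = 1 ∨ (u i : ℂ).re = -1 := by
    have hnorm := (u i).normSq_coe
    rw [Complex.normSq_apply, him, mul_zero, add_zero] at hnorm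
    exact mul_self_eq_one_iff.mp hnorm
  have hsum : (u 0 : ℂ).re + (u 1 : ℂ).re - 1 = 0 := congrFun h 2
  rcases hre 0 (congrFun h 0) with h₀ | h₀ <;> rcases hre 1 (congrFun h 1) with h₁ | h₁ <;>
    norm_num [h₀, h₁] at hsum

theorem kuhnSum_labelCochain_torusVector {P : ℕ} [NeZero (2 * P)] (hP : 2 ≤ P) :
    kuhnSum (Equiv.refl (Fin 2)) (labelCochain fun g : Fin 2 → ZMod (2 * P) =>
      vectorLabel (torusVector fun i => ZMod.toCircle (g i))) = 1 := by
  have hre (a : ZMod (2 * P)) : (ZMod.toCircle a : ℂ).re ≤ 1 :=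
    (Complex.re_le_norm _).trans (Circle.norm_coe _).le
  refine kuhnSum_labelCochain_stairLabel (P := fun a => 0 < (ZMod.toCircle a : ℂ).im)
    (Q := fun a b => 0 < (ZMod.toCircle a : ℂ).re + (ZMod.toCircle b : ℂ).re - 1)
    (by simp) (im_toCircle_one_pos hP) (fun a => eq_zero_of_im_toCircle_add_one_pos hP) (by simp)
    (fun a ha ha' b => ?_) (fun b hb hb' => ?_)
  · linarith [hre b, re_toCircle_add_one_eq_neg_one hP ha ha']
  · linarith [hre 0, re_toCircle_add_one_eq_neg_one hP hb hb']

end TorusVector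

section TorusHomotopies

theorem exists_dist_toCircle_add_one_lt {δ : ℝ} (hδ : 0 < δ) : ∃ (P : ℕ) (_ : NeZero (2 * P)),
    2 ≤ P ∧ ∀ a : ZMod (2 * P), dist (ZMod.toCircle (a + 1)) (ZMod.toCircle a) < δ := by
  have hlim : Tendsto (fun P : ℕ => Circle.exp (1 / P * Real.pi)) atTop (𝓝 1) := by
    rw [← Circle.exp_zero, ← zero_mul Real.pi]
    exact (Circle.exp.continuous.tendsto _).comp (tendsto_one_div_atTop_nhds_zero_nat.mul_const _)
  obtain ⟨P, hP, hdist⟩ := ((eventually_ge_atTop 2).and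
    (hlim.eventually (Metric.ball_mem_nhds _ hδ))).exists
  have hN : NeZero (2 * P) := ⟨by omega⟩
  refine ⟨P, hN, hP, fun a => ?_⟩
  have hone : ZMod.toCircle (1 : ZMod (2 * P)) = Circle.exp (1 / P * Real.pi) := by
    rw [toCircle_eq_exp_div_mul_pi, ZMod.val_one'' (by omega), Nat.cast_one]
  have hdist_eq (z w : Circle) : dist z w = ‖(z : ℂ) - w‖ :=
    (Subtype.dist_eq z w).trans (dist_eq_norm _ _)
  rw [AddChar.map_add_eq_mul, hdist_eq, Circle.coe_mul, ← mul_sub_one, norm_mul, Circle.norm_coe,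
    one_mul, hone]
  rwa [hdist_eq, Circle.coe_one] at hdist

theorem dist_toCircle_kuhnPath_lt {ι : Type*} [Fintype ι] {d N : ℕ} [NeZero N] {δ : ℝ} (hδ : 0 < δ)
    (h : ∀ a : ZMod N, dist (ZMod.toCircle (a + 1)) (ZMod.toCircle a) < δ) (e : ι ≃ Fin d)
    (x : ι → ZMod N) (τ : Equiv.Perm ι) (k : ℕ) :
    dist (fun i => ZMod.toCircle (kuhnPath e x τ k i)) (fun i => ZMod.toCircle (x i)) < δ := by
  refine (dist_pi_lt_iff hδ).mpr fun i => ?_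
  rw [kuhnPath]
  split_ifs
  · exact h _
  · rwa [add_zero, dist_self]

theorem exists_dist_unitInterval_succ_lt {δ : ℝ} (hδ : 0 < δ) :
    ∃ (t : ℕ → unitInterval) (n : ℕ), t 0 = 0 ∧ t n = 1 ∧ ∀ k, dist (t (k + 1)) (t k) < δ := by
  obtain ⟨t, ht_zero, ht_mono, ⟨n, hn⟩, ht⟩ :=
    exists_monotone_Icc_subset_open_cover_unitInterval
      (c := fun s : unitInterval => Metric.ball s (δ / 2)) (fun _ => Metric.isOpen_ball)
      fun s _ => Set.mem_iUnion.mpr ⟨s, Metric.mem_ball_self (half_pos hδ)⟩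
  refine ⟨t, n, ht_zero, hn n le_rfl, fun k => ?_⟩
  obtain ⟨s, hs⟩ := ht k
  have hle : t k ≤ t (k + 1) := ht_mono k.le_succ
  rw [← add_halves δ]
  exact (dist_triangle_right _ _ s).trans_lt
    (add_lt_add (hs (Set.right_mem_Icc.mpr hle)) (hs (Set.left_mem_Icc.mpr hle)))

/-- If over each member of a cover of a torus by `2 |I|` sets the degree one maps `torusVector` of
the factors `(i, 0)` and `(i, 1)` were homotopic for all `i`, then the class
`∑ i, (a (i, 0) - a (i, 1))` would be a sum of local coboundaries, but its `2 |I|`-th power is not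
zero. -/
theorem not_forall_torusVector_homotopic {I : Type*} [Finite I] {M : ℕ} (e : I × Fin 2 ≃ Fin M)
    {K V : Fin M → Set ((I × Fin 2) × Fin 2 → Circle)} (hK : ∀ j, IsClosed (K j))
    (hK_cover : ⋃ j, K j = Set.univ) (hV : ∀ j, IsOpen (V j)) (hKV : ∀ j, K j ⊆ V j)
    {v : Fin M → I → ((I × Fin 2) × Fin 2 → Circle) × unitInterval → Fin 3 → ℝ}
    (hv : ∀ j i, ContinuousOn (v j i) (V j ×ˢ Set.univ)) (hv_ne : ∀ j i z, v j i z ≠ 0)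
    (hv_zero : ∀ j i u, vectorLabel (v j i (u, 0)) =
      vectorLabel (torusVector (Function.curry u (i, 0))))
    (hv_one : ∀ j i u, vectorLabel (v j i (u, 1)) =
      vectorLabel (torusVector (Function.curry u (i, 1)))) : False := by
  cases nonempty_fintype I
  have hball : ∀ᶠ δ in 𝓝[>] (0 : ℝ), ∀ j i, ∀ z ∈ K j ×ˢ (Set.univ : Set unitInterval),
      ∃ m, ∀ w ∈ Metric.ball z δ, vectorLabel (v j i w) ≠ m :=
    eventually_all.mpr fun j => eventually_all.mpr fun i =>
      eventually_forall_ball_vectorLabel_ne ((hK j).isCompact.prod isCompact_univ)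
        (fun z hz => (hv j i).continuousAt
          (prod_mem_nhds ((hV j).mem_nhds (hKV j hz.1)) univ_mem)) fun z _ => hv_ne j i z
  obtain ⟨δ, hδ_ball, hδ : 0 < δ⟩ := (hball.and self_mem_nhdsWithin).exists
  obtain ⟨P, hN, hP, hgrid⟩ := exists_dist_toCircle_add_one_lt hδ
  obtain ⟨t, n, ht_zero, ht_one, ht⟩ := exists_dist_unitInterval_succ_lt hδ
  refine one_ne_zero ((kuhnSum_labelCochain_torusVector hP).symm.trans
    (kuhnSum_labelCochain_eq_zero (n := n) e
      (fun j i k g => vectorLabel (v j i (fun c => ZMod.toCircle (g c), t k)))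
      (fun j i g => ?_) (fun j i g => ?_) fun x τ => ?_))
  · rw [ht_zero, hv_zero]
    rfl
  · rw [ht_one, hv_one]
    rfl
  · obtain ⟨j, hj⟩ := Set.iUnion_eq_univ_iff.mp hK_cover fun c => ZMod.toCircle (x c)
    refine ⟨j, fun i k _ => ?_⟩
    obtain ⟨m, hm⟩ := hδ_ball j i (fun c => ZMod.toCircle (x c), t k) ⟨hj, trivial⟩
    refine ⟨m, Set.forall_mem_range.mpr fun r => ⟨hm _ ?_, hm _ ?_⟩⟩
    · exact max_lt (dist_toCircle_kuhnPath_lt hδ hgrid _ x τ r) (by rwa [dist_self])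
    · exact max_lt (dist_toCircle_kuhnPath_lt hδ hgrid _ x τ r) (ht k)

end TorusHomotopies

section MotionPlanning

variable {X : Type*} [TopologicalSpace X]

theorem hasMotionPlanningSection_iff_continuousOn {U : Set (X × X)} :
    HasMotionPlanningSection X U ↔ ∃ γ : (X × X) × unitInterval → X,
      (∀ p, γ (p, 0) = p.1 ∧ γ (p, 1) = p.2) ∧ ContinuousOn γ (U ×ˢ Set.univ) := by
  classical
  constructor
  · rintro ⟨s, hs⟩
    refine ⟨fun z => if h : z.1 ∈ U then s ⟨z.1, h⟩ z.2 else if z.2 = 0 then z.1.1 else z.1.2,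
      fun p => ?_, continuousOn_iff_continuous_domRestrict.mpr ?_⟩
    · by_cases h : p ∈ U
      · simpa only [h, dif_pos] using hs ⟨p, h⟩
      · simp [h]
    · have hcont : Continuous fun z : (U ×ˢ Set.univ : Set ((X × X) × unitInterval)) =>
          s ⟨z.1.1, z.2.1⟩ z.1.2 := by fun_prop
      refine hcont.congr fun z => ?_
      rw [Set.domRestrict_apply, dif_pos z.2.1]
  · rintro ⟨γ, hγ, hcont⟩
    let Γ : C(U × unitInterval, X) := ⟨fun z => γ (z.1, z.2),
      hcont.comp_continuous (by fun_prop) fun z => ⟨z.1.2, Set.mem_univ _⟩⟩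
    exact ⟨Γ.curry, fun p => hγ p⟩

theorem HasMotionPlanningSection.mono {U V : Set (X × X)} (h : HasMotionPlanningSection X V)
    (hUV : U ⊆ V) : HasMotionPlanningSection X U := by
  obtain ⟨s, hs⟩ := h
  exact ⟨s.comp (ContinuousMap.inclusion hUV), fun p => hs _⟩

theorem HasMotionPlanningSection.iUnion {ι : Type*} {U : ι → Set (X × X)}
    (hU : ∀ i, IsOpen (U i)) (hdisj : Pairwise (Function.onFun Disjoint U))
    (h : ∀ i, HasMotionPlanningSection X (U i)) : HasMotionPlanningSection X (⋃ i, U i) := by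
  choose s hs using h
  let S (i : ι) : Set (⋃ i, U i) := Subtype.val ⁻¹' U i
  have hS_nhds (z : ⋃ i, U i) : ∃ i, S i ∈ 𝓝 z :=
    (Set.mem_iUnion.mp z.2).imp fun i hi =>
      ((hU i).preimage continuous_subtype_val).mem_nhds hi
  let φ (i : ι) : C(S i, PathSpace X) := (s i).comp ⟨fun z => ⟨z.1.1, z.2⟩, by fun_prop⟩
  have hφ (i j z) (hi : z ∈ S i) (hj : z ∈ S j) : φ i ⟨z, hi⟩ = φ j ⟨z, hj⟩ := by
    obtain rfl := hdisj.eq (Set.not_disjoint_iff.mpr ⟨z.1, hi, hj⟩)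
    rfl
  refine ⟨ContinuousMap.liftCover S φ hφ hS_nhds, fun z => ?_⟩
  obtain ⟨i, hi⟩ := Set.mem_iUnion.mp z.2
  rw [show ContinuousMap.liftCover S φ hφ hS_nhds z = φ i ⟨z, hi⟩ from
    ContinuousMap.liftCover_coe (⟨z, hi⟩ : S i)]
  exact hs i ⟨z.1, hi⟩

theorem hasMotionPlanningSection_empty : HasMotionPlanningSection X ∅ :=
  ⟨⟨fun p => p.2.elim, continuous_of_const fun p => p.2.elim⟩, fun p => p.2.elim⟩

theorem HasTCCover.mono {k l : ℕ} (h : HasTCCover X k) (hkl : k ≤ l) : HasTCCover X l := by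
  obtain ⟨U, hU_open, hU_cover, hU⟩ := h
  refine ⟨fun i => if hi : i < k then U ⟨i, hi⟩ else ∅, fun i => ?_, ?_, fun i => ?_⟩
  · by_cases hi : i < k
    · simpa only [hi, dif_pos] using hU_open _
    · simp only [hi, dite_false, isOpen_empty]
  · refine Set.eq_univ_of_forall fun z => ?_
    obtain ⟨i, hi⟩ := Set.mem_iUnion.mp (hU_cover ▸ Set.mem_univ z)
    exact Set.mem_iUnion.mpr ⟨⟨i, i.2.trans_le hkl⟩, by simpa using hi⟩
  · by_cases hi : i < k
    · simpa only [hi, dif_pos] using hU _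
    · simpa only [hi, dite_false] using hasMotionPlanningSection_empty

theorem topComplexity_eq_of_hasTCCover {k : ℕ} (h : HasTCCover X (k + 1))
    (h_not : ¬HasTCCover X k) : TopComplexity X = (k + 1 : ℕ) := by
  refine le_antisymm (sInf_le ⟨k + 1, rfl, h⟩) (le_sInf ?_)
  rintro _ ⟨l, rfl, hl⟩
  by_contra! hlt
  exact h_not (hl.mono (Nat.lt_succ_iff.mp (Nat.cast_lt.mp hlt)))

end MotionPlanning

section LowerBound

/-- The configuration of the origin and of points on the spheres of radii `1, …, m` in given
directions. -/
noncomputable def radialConf {m d : ℕ} (w : Fin m → {v : Fin d → ℝ // v ≠ 0}) :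
    ConfSpace (m + 1) d where
  val := Fin.cons 0 fun i => (((i : ℝ) + 1) / ‖(w i).1‖) • (w i).1
  property := by
    refine Function.Injective.of_comp (f := norm) ?_
    have hnorm : (norm ∘ Fin.cons 0 fun i => (((i : ℝ) + 1) / ‖(w i).1‖) • (w i).1) =
        fun k : Fin (m + 1) => ((k : ℕ) : ℝ) := by
      refine funext fun k => Fin.cases ?_ (fun i => ?_) k
      · simp
      · have hne : ‖(w i).1‖ ≠ 0 := norm_ne_zero_iff.mpr (w i).2
        rw [Function.comp_apply, Fin.cons_succ, norm_smul, norm_div, norm_norm,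
          div_mul_cancel₀ _ hne, Real.norm_of_nonneg (by positivity), Fin.val_succ, Nat.cast_succ]
    rw [hnorm]
    exact Nat.cast_injective.comp Fin.val_injective

theorem continuous_radialConf {m d : ℕ} : Continuous (radialConf (m := m) (d := d)) := by
  refine Continuous.subtype_mk (continuous_pi fun k => Fin.cases ?_ (fun i => ?_) k) _
  · exact continuous_const
  · have hw : Continuous fun w : Fin m → {v : Fin d → ℝ // v ≠ 0} => (w i).1 := by fun_prop
    exact (continuous_const.div hw.norm fun w => norm_ne_zero_iff.mpr (w i).2).smul hw

theorem vectorLabel_radialConf_sub {m : ℕ} (w : Fin m → {v : Fin 3 → ℝ // v ≠ 0}) (i : Fin m) :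
    vectorLabel ((radialConf w).1 i.succ - (radialConf w).1 0) = vectorLabel (w i).1 := by
  have hw : 0 < ‖(w i).1‖ := norm_pos_iff.mpr (w i).2
  simp only [radialConf, Fin.cons_succ, Fin.cons_zero, sub_zero]
  exact vectorLabel_smul (by positivity) _

/-- The family of configurations in `ℝ³` parametrized by the factors `(i, a)`, for fixed `a`, of a
torus. -/
noncomputable def torusConf {m : ℕ} (a : Fin 2) (u : (Fin m × Fin 2) × Fin 2 → Circle) :
    ConfSpace (m + 1) 3 :=
  radialConf fun i => ⟨torusVector (Function.curry u (i, a)), torusVector_ne_zero _⟩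

theorem continuous_torusConf {m : ℕ} (a : Fin 2) : Continuous (torusConf (m := m) a) :=
  continuous_radialConf.comp <| continuous_pi fun i => Continuous.subtype_mk
    (continuous_torusVector.comp (continuous_pi fun k => continuous_apply ((i, a), k))) _

theorem not_hasTCCover_confSpace (m : ℕ) : ¬ HasTCCover (ConfSpace (m + 1) 3) (m * 2) := by
  rintro ⟨U, hU_open, hU_cover, hU⟩
  choose γ hγ hγ_cont using fun j => hasMotionPlanningSection_iff_continuousOn.mp (hU j)
  let f (u : (Fin m × Fin 2) × Fin 2 → Circle) := (torusConf 0 u, torusConf 1 u)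
  have hf : Continuous f := (continuous_torusConf 0).prodMk (continuous_torusConf 1)
  have hV (j : Fin (m * 2)) : IsOpen (f ⁻¹' U j) := (hU_open j).preimage hf
  obtain ⟨K, hK_cover, hK, hKV⟩ := exists_iUnion_eq_closed_subset hV (fun _ => Set.toFinite _)
    (by rw [← Set.preimage_iUnion, hU_cover, Set.preimage_univ])
  refine not_forall_torusVector_homotopic finProdFinEquiv hK hK_cover hV hKV
    (v := fun j i z => (γ j (f z.1, z.2)).1 i.succ - (γ j (f z.1, z.2)).1 0)
    (fun j i => ?_) (fun j i z => ?_) (fun j i u => ?_) (fun j i u => ?_)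
  · have hpath : ContinuousOn (fun z : _ × unitInterval => (γ j (f z.1, z.2)).1)
        ((f ⁻¹' U j) ×ˢ Set.univ) :=
      continuous_subtype_val.comp_continuousOn ((hγ_cont j).comp (by fun_prop) fun z hz => hz)
    exact (continuousOn_pi.mp hpath i.succ).sub (continuousOn_pi.mp hpath 0)
  · exact sub_ne_zero.mpr ((γ j (f z.1, z.2)).2.ne (Fin.succ_ne_zero i))
  · simp only [(hγ j (f u)).1]
    exact vectorLabel_radialConf_sub _ i
  · simp only [(hγ j (f u)).2]
    exact vectorLabel_radialConf_sub _ i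

end LowerBound

section Strata

variable {X : Type*}

theorem hasMotionPlanningSection_of_homotopic [TopologicalSpace X] {U : Set (X × X)}
    (h : ContinuousMap.Homotopic (⟨fun z => z.1.1, by fun_prop⟩ : C(U, X))
      ⟨fun z => z.1.2, by fun_prop⟩) : HasMotionPlanningSection X U := by
  obtain ⟨H⟩ := h
  exact ⟨(H.toContinuousMap.comp ⟨Prod.swap, continuous_swap⟩).curry,
    fun z => ⟨H.apply_zero z, H.apply_one z⟩⟩

theorem hasMotionPlanningSection_prod [TopologicalSpace X] {U V : Set X} {x₀ : X}
    (hU : ContinuousMap.Homotopic (⟨Subtype.val, continuous_subtype_val⟩ : C(U, X))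
      (ContinuousMap.const _ x₀))
    (hV : ContinuousMap.Homotopic (⟨Subtype.val, continuous_subtype_val⟩ : C(V, X))
      (ContinuousMap.const _ x₀)) : HasMotionPlanningSection X (U ×ˢ V) := by
  apply hasMotionPlanningSection_of_homotopic
  have hfst := hU.comp (ContinuousMap.Homotopic.refl
    (⟨fun z => ⟨z.1.1, z.2.1⟩, by fun_prop⟩ : C((U ×ˢ V : Set (X × X)), U)))
  have hsnd := hV.comp (ContinuousMap.Homotopic.refl
    (⟨fun z => ⟨z.1.2, z.2.2⟩, by fun_prop⟩ : C((U ×ˢ V : Set (X × X)), V)))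
  exact hfst.trans hsnd.symm

theorem isOpen_setOf_infEDist_lt [PseudoEMetricSpace X] {Q : Type*} [Finite Q] (S : Q → Set X)
    (q : Q) (R : Q → Prop) :
    IsOpen {z | ∀ q', R q' → Metric.infEDist z (S q) < Metric.infEDist z (S q')} := by
  simp only [Set.ofPred_forall]
  exact isOpen_iInter_of_finite fun q' => isOpen_iInter_of_finite fun _ =>
    isOpen_lt Metric.continuous_infEDist Metric.continuous_infEDist

/-- A point of the stratum of `q` is at positive distance from the other strata of the same rank, so
the neighbourhoods of the strata of a given rank can be shrunk to disjoint ones by comparing the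
distances to these strata. -/
theorem hasTCCover_of_strata [PseudoMetricSpace X] {Q : Type*} [Finite Q] {r : Q → ℕ} {k : ℕ}
    (hr : ∀ q, r q ≤ k) {A : X × X → Q} {U : Q → Set (X × X)} (hU : ∀ q, IsOpen (U q))
    (hA : ∀ z, z ∈ U (A z))
    (hcl : ∀ z q, z ∈ closure {w | A w = q} → A z ≠ q → r (A z) < r q)
    (hs : ∀ q, HasMotionPlanningSection X (U q)) : HasTCCover X (k + 1) := by
  let W (q : Q) : Set (X × X) := U q ∩ {z | ∀ q', q' ≠ q ∧ r q' = r q →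
    Metric.infEDist z {w | A w = q} < Metric.infEDist z {w | A w = q'}}
  have hW (q : Q) : IsOpen (W q) :=
    (hU q).inter (isOpen_setOf_infEDist_lt (fun q => {w | A w = q}) q _)
  refine ⟨fun l => ⋃ q : {q // r q = l}, W q, fun l => isOpen_iUnion fun q => hW q, ?_, fun l => ?_⟩
  · refine Set.eq_univ_of_forall fun z => ?_
    refine Set.mem_iUnion.mpr ⟨⟨r (A z), Nat.lt_succ_of_le (hr _)⟩, Set.mem_iUnion.mpr
      ⟨⟨A z, rfl⟩, hA z, fun q' ⟨hq', hrq⟩ => ?_⟩⟩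
    rw [Metric.infEDist_zero_of_mem (show z ∈ {w | A w = A z} from rfl),
      Metric.infEDist_pos_iff_notMem_closure]
    exact fun hz => (hcl z q' hz hq'.symm).ne hrq.symm
  · refine HasMotionPlanningSection.iUnion (fun q => hW q) (fun p q hpq => ?_)
      fun q => (hs q).mono Set.inter_subset_left
    have hne : p.1 ≠ q.1 := Subtype.coe_ne_coe.mpr hpq
    have hrank : r p.1 = r q.1 := p.2.trans q.2.symm
    exact Set.disjoint_left.mpr fun z hp hq =>
      lt_asymm (hp.2 q ⟨hne.symm, hrank.symm⟩) (hq.2 p ⟨hne, hrank⟩)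

theorem hasTCCover_of_contractible_strata [PseudoMetricSpace X] {P : Type*} [Finite P] {r : P → ℕ}
    {k : ℕ} (hr : ∀ p, r p ≤ k) {A : X → P} {U : P → Set X} (hU : ∀ p, IsOpen (U p))
    (hA : ∀ x, x ∈ U (A x))
    (hcl : ∀ x p, x ∈ closure {y | A y = p} → A x ≠ p → r (A x) < r p) {x₀ : X}
    (hc : ∀ p, ContinuousMap.Homotopic (⟨Subtype.val, continuous_subtype_val⟩ : C(U p, X))
      (ContinuousMap.const _ x₀)) : HasTCCover X (2 * k + 1) := by
  refine hasTCCover_of_strata (r := fun q : P × P => r q.1 + r q.2)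
    (A := fun z => (A z.1, A z.2)) (U := fun q => U q.1 ×ˢ U q.2)
    (fun q => (Nat.add_le_add (hr _) (hr _)).trans_eq (two_mul k).symm)
    (fun q => (hU _).prod (hU _)) (fun z => ⟨hA _, hA _⟩) ?_
    (fun q => hasMotionPlanningSection_prod (hc _) (hc _))
  rintro ⟨x, y⟩ ⟨p, q⟩ hz hne
  have hset : {w : X × X | (A w.1, A w.2) = (p, q)} = {x | A x = p} ×ˢ {y | A y = q} :=
    Set.ext fun w => Prod.mk_inj
  rw [hset, closure_prod_eq] at hz
  have hle (x p) (hx : x ∈ closure {y | A y = p}) : r (A x) ≤ r p := by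
    by_cases hp : A x = p
    · rw [hp]
    · exact (hcl x p hx hp).le
  rw [ne_eq, Prod.mk_inj, not_and_or] at hne
  rcases hne with hne | hne
  · exact add_lt_add_of_lt_of_le (hcl x p hz.1 hne) (hle y q hz.2)
  · exact add_lt_add_of_le_of_lt (hle x p hz.1) (hcl y q hz.2 hne)

end Strata

section LevelRank

variable {n : ℕ} {α β : Type*} [LinearOrder α] [LinearOrder β]

/-- The number of indices at which `f` is smaller than at `i`, which encodes the weak order on the
indices pulled back along `f` by a function from a finite type. -/
def levelRank (f : Fin n → α) (i : Fin n) : Fin n where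
  val := (Finset.univ.filter fun j => f j < f i).card
  isLt := (Finset.card_lt_univ_of_notMem (x := i) (by simp)).trans_eq (Fintype.card_fin n)

theorem levelRank_lt_iff {f : Fin n → α} {i j : Fin n} :
    levelRank f i < levelRank f j ↔ f i < f j := by
  constructor
  · contrapose!
    refine fun hji => Fin.mk_le_mk.mpr (Finset.card_le_card ?_)
    exact Finset.monotone_filter_right _ fun k _ (hk : f k < f j) => hk.trans_le hji
  · refine fun hij => Fin.mk_lt_mk.mpr (Finset.card_lt_card ?_)
    refine (Finset.ssubset_iff_of_subset ?_).mpr ⟨i, by simpa using hij, by simp⟩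
    exact Finset.monotone_filter_right _ fun k _ (hk : f k < f i) => hk.trans hij

theorem levelRank_eq_iff {f : Fin n → α} {i j : Fin n} :
    levelRank f i = levelRank f j ↔ f i = f j := by
  simp only [eq_iff_le_not_lt, ← not_lt, levelRank_lt_iff]

theorem levelRank_congr {f : Fin n → α} {g : Fin n → β} (h : ∀ i j, f i < f j ↔ g i < g j) :
    levelRank f = levelRank g := by
  simp only [funext_iff, levelRank, h, implies_true]

theorem card_image_lt_card_image_of_refines {ι : Type*} [Fintype ι] {f : ι → α} {g : ι → β}
    (h : ∀ i j, f i < f j → g i < g j) {i j : ι} (hf : f i = f j) (hg : g i ≠ g j) :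
    (Finset.univ.image f).card < (Finset.univ.image g).card := by
  have hfac : f.FactorsThrough g := fun k l hkl => by
    by_contra hne
    rcases lt_or_gt_of_ne hne with hlt | hlt
    · exact (h _ _ hlt).ne hkl
    · exact (h _ _ hlt).ne' hkl
  have : Nonempty α := ⟨f i⟩
  obtain ⟨e, rfl⟩ := (Function.factorsThrough_iff _).mp hfac
  rw [← Finset.image_image]
  refine Finset.card_image_le.lt_of_ne fun hcard => hg ?_
  exact Finset.card_image_iff.mp hcard (by simp) (by simp) hf

theorem card_image_levelRank_lt {f : Fin n → α} {g : Fin n → β} (h : ∀ i j, f i < f j → g i < g j)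
    (hne : levelRank f ≠ levelRank g) :
    (Finset.univ.image (levelRank f)).card < (Finset.univ.image (levelRank g)).card := by
  obtain ⟨i, j, hf, hg⟩ : ∃ i j, f j ≤ f i ∧ g i < g j := by
    by_contra! hcon
    refine hne (levelRank_congr fun i j => ⟨h i j, fun hij => ?_⟩)
    exact not_le.mp fun hle => (hcon i j hle).not_gt hij
  have hfeq : f i = f j := le_antisymm (not_lt.mp fun hji => (h j i hji).not_gt hg) hf
  refine card_image_lt_card_image_of_refines ?_ (levelRank_eq_iff.mpr hfeq)
    (levelRank_lt_iff.mpr hg).ne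
  simpa only [levelRank_lt_iff] using h

theorem exists_injective_refining {k : ℕ} (p : Fin n → Fin k) :
    ∃ x : Fin n → ℝ, Function.Injective x ∧ ∀ i j, p i < p j → x i < x j := by
  refine ⟨fun i => (finProdFinEquiv (p i, i) : ℕ), fun i j hij => ?_, fun i j hij => ?_⟩
  · exact congrArg Prod.snd (finProdFinEquiv.injective (Fin.ext (Nat.cast_injective hij)))
  · have hle : n * ((p i : ℕ) + 1) ≤ n * (p j : ℕ) := Nat.mul_le_mul_left n hij
    have hi : (i : ℕ) < n := i.2
    simp only [finProdFinEquiv_apply_val, Nat.cast_lt]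
    lia

end LevelRank

section UpperBound

variable {n d : ℕ}

theorem continuous_confSpace_apply (i : Fin n) : Continuous fun C : ConfSpace n d => C.1 i :=
  (continuous_apply i).comp continuous_subtype_val

theorem confSpace_homotopic_of_segment {Y : Type*} [TopologicalSpace Y] {f g : C(Y, ConfSpace n d)}
    (h : ∀ y, ∀ t : unitInterval, Function.Injective fun i =>
      (1 - (t : ℝ)) • (f y).1 i + (t : ℝ) • (g y).1 i) : f.Homotopic g := by
  have htime : Continuous fun z : unitInterval × Y => (z.1 : ℝ) := by fun_prop
  have hpt (f : C(Y, ConfSpace n d)) (i : Fin n) :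
      Continuous fun z : unitInterval × Y => (f z.2).1 i :=
    (continuous_confSpace_apply i).comp (f.continuous.comp continuous_snd)
  refine ⟨⟨⟨fun z => ⟨fun i => (1 - (z.1 : ℝ)) • (f z.2).1 i + (z.1 : ℝ) • (g z.2).1 i, h z.2 z.1⟩,
    Continuous.subtype_mk (continuous_pi fun i =>
      ((continuous_const.sub htime).smul (hpt f i)).add (htime.smul (hpt g i))) _⟩,
    fun y => Subtype.ext ?_, fun y => Subtype.ext ?_⟩⟩
  · simp
  · simp

theorem confSpace_homotopic_of_apply_eq {Y : Type*} [TopologicalSpace Y]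
    {f g : C(Y, ConfSpace n d)} (a : Fin d) {x : Fin n → ℝ} (hx : Function.Injective x)
    (hf : ∀ y i, (f y).1 i a = x i) (hg : ∀ y i, (g y).1 i a = x i) : f.Homotopic g := by
  refine confSpace_homotopic_of_segment fun y t i j hij => hx ?_
  have ha := congrFun hij a
  simp only [Pi.add_apply, Pi.smul_apply, smul_eq_mul, hf, hg] at ha
  linarith

/-- The configurations whose first coordinates are ordered at least as strictly as the values of
`p`, and whose points are distinguished by the other coordinates where `p` is constant. It is an
open neighbourhood of the stratum of the configurations with first coordinates of rank `p`. -/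
def levelNhd (p : Fin n → Fin n) : Set (ConfSpace n (d + 1)) :=
  {C | (∀ i j, p i < p j → C.1 i 0 < C.1 j 0) ∧
    ∀ i j, i ≠ j → p i = p j → Fin.tail (C.1 i) ≠ Fin.tail (C.1 j)}

theorem isOpen_setOf_forall_lt (R : Fin n → Fin n → Prop) :
    IsOpen {C : ConfSpace n (d + 1) | ∀ i j, R i j → C.1 i 0 < C.1 j 0} := by
  simp only [Set.ofPred_forall]
  exact isOpen_iInter_of_finite fun i => isOpen_iInter_of_finite fun j =>
    isOpen_iInter_of_finite fun _ =>
      isOpen_lt ((continuous_apply 0).comp (continuous_confSpace_apply i))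
        ((continuous_apply 0).comp (continuous_confSpace_apply j))

theorem isOpen_levelNhd (p : Fin n → Fin n) : IsOpen (levelNhd (d := d) p) := by
  simp only [levelNhd, Set.ofPred_and, Set.ofPred_forall]
  refine IsOpen.inter ?_ ?_
  · simpa only [Set.ofPred_forall] using isOpen_setOf_forall_lt fun i j => p i < p j
  · exact isOpen_iInter_of_finite fun i => isOpen_iInter_of_finite fun j =>
      isOpen_iInter_of_finite fun _ => isOpen_iInter_of_finite fun _ =>
      isOpen_ne_fun (continuous_confSpace_apply i).finTail (continuous_confSpace_apply j).finTail

theorem mem_levelNhd_levelRank (C : ConfSpace n (d + 1)) :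
    C ∈ levelNhd (levelRank fun i => C.1 i 0) := by
  refine ⟨fun i j => levelRank_lt_iff.mp, fun i j hij hp htail => hij (C.2 ?_)⟩
  rw [← Fin.cons_self_tail (C.1 i), ← Fin.cons_self_tail (C.1 j), levelRank_eq_iff.mp hp, htail]

theorem card_image_levelRank_lt_of_mem_closure {C : ConfSpace n (d + 1)} {q : Fin n → Fin n}
    (hC : C ∈ closure {D : ConfSpace n (d + 1) | levelRank (fun i => D.1 i 0) = q})
    (hne : levelRank (fun i => C.1 i 0) ≠ q) :
    (Finset.univ.image (levelRank fun i => C.1 i 0)).card < (Finset.univ.image q).card := by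
  obtain ⟨D, hD, rfl⟩ := mem_closure_iff.mp hC _
    (isOpen_setOf_forall_lt fun i j => C.1 i 0 < C.1 j 0) fun _ _ => id
  exact card_image_levelRank_lt hD hne

theorem segment_injective_of_mem_levelNhd {p : Fin n → Fin n} {C : ConfSpace n (d + 1)}
    (hC : C ∈ levelNhd p) {x : Fin n → ℝ} (hx : ∀ i j, p i < p j → x i < x j) (t : unitInterval) :
    Function.Injective fun i =>
      (1 - (t : ℝ)) • C.1 i + (t : ℝ) • (Fin.cons (x i) (Fin.tail (C.1 i)) : Fin (d + 1) → ℝ) := by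
  intro i j hij
  have hlt (i j) (hp : p i < p j) :
      (1 - (t : ℝ)) * C.1 i 0 + t * x i < (1 - (t : ℝ)) * C.1 j 0 + t * x j := by
    have hpos := convex_Ioi 0 (sub_pos.mpr (hC.1 i j hp)) (sub_pos.mpr (hx i j hp))
      (sub_nonneg.mpr t.2.2) t.2.1 (sub_add_cancel _ _)
    rw [Set.mem_Ioi, smul_eq_mul, smul_eq_mul] at hpos
    linarith
  have hhead : (1 - (t : ℝ)) * C.1 i 0 + t * x i = (1 - (t : ℝ)) * C.1 j 0 + t * x j :=
    congrFun hij 0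
  have htail : Fin.tail (C.1 i) = Fin.tail (C.1 j) := funext fun a => by
    have ha : (1 - (t : ℝ)) * C.1 i a.succ + t * C.1 i a.succ =
      (1 - (t : ℝ)) * C.1 j a.succ + t * C.1 j a.succ := congrFun hij a.succ
    simp only [Fin.tail]
    linarith
  rcases lt_trichotomy (p i) (p j) with hp | hp | hp
  · exact absurd hhead (hlt i j hp).ne
  · exact not_ne_iff.mp fun hne => hC.2 i j hne hp htail
  · exact absurd hhead (hlt j i hp).ne'

theorem homotopic_const_levelNhd (p : Fin n → Fin n) :
    ContinuousMap.Homotopic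
      (⟨Subtype.val, continuous_subtype_val⟩ : C(levelNhd p, ConfSpace n (d + 2)))
      (ContinuousMap.const _ ⟨fun i => Fin.cons 0 (Fin.cons (i : ℝ) 0), fun i j hij =>
        Fin.ext (Nat.cast_injective (congrFun hij 1))⟩) := by
  obtain ⟨x, hx_inj, hx_lt⟩ := exists_injective_refining p
  let spread : C(levelNhd p, ConfSpace n (d + 2)) :=
    ⟨fun C => ⟨fun i => Fin.cons (x i) (Fin.tail (C.1.1 i)), fun i j hij =>
      hx_inj (congrFun hij 0)⟩,
      Continuous.subtype_mk (continuous_pi fun i => Continuous.finCons continuous_const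
        ((continuous_confSpace_apply i).comp continuous_subtype_val).finTail) _⟩
  let line : C(levelNhd (d := d + 1) p, ConfSpace n (d + 2)) :=
    ContinuousMap.const _ ⟨fun i => Fin.cons (x i) (Fin.cons (i : ℝ) 0), fun i j hij =>
      hx_inj (congrFun hij 0)⟩
  have hspread : ContinuousMap.Homotopic ⟨Subtype.val, by fun_prop⟩ spread :=
    confSpace_homotopic_of_segment fun C => segment_injective_of_mem_levelNhd C.2 hx_lt
  have hline : spread.Homotopic line :=
    confSpace_homotopic_of_apply_eq 0 hx_inj (fun _ _ => rfl) fun _ _ => rfl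
  exact hspread.trans <| hline.trans <| confSpace_homotopic_of_apply_eq 1
    (Nat.cast_injective.comp Fin.val_injective) (fun _ _ => rfl) fun _ _ => rfl

theorem hasTCCover_confSpace (m d : ℕ) : HasTCCover (ConfSpace (m + 1) (d + 2)) (2 * m + 1) := by
  refine hasTCCover_of_contractible_strata
    (r := fun p : Fin (m + 1) → Fin (m + 1) => (Finset.univ.image p).card - 1) (fun p => ?_)
    isOpen_levelNhd mem_levelNhd_levelRank (fun C q hC hne => ?_) homotopic_const_levelNhd
  · have hcard := Finset.card_le_univ (Finset.univ.image p)
    rw [Fintype.card_fin] at hcard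
    lia
  · have hlt := card_image_levelRank_lt_of_mem_closure hC hne
    have hpos := (Finset.univ_nonempty.image (levelRank fun i => C.1 i 0)).card_pos
    lia

end UpperBound

/-- the topological complexity of the configuration space of `n ≥ 2`
ordered distinct points in `ℝ³` equals `2n - 1`. -/
theorem tc_config_space_R3 (n : ℕ) (hn : 2 ≤ n) :
    TopComplexity (ConfSpace n 3) = (2 * n - 1 : ℕ) := by
  obtain ⟨m, rfl⟩ : ∃ m, n = m + 1 := ⟨n - 1, by omega⟩
  rw [show 2 * (m + 1) - 1 = 2 * m + 1 by omega]
  exact topComplexity_eq_of_hasTCCover (hasTCCover_confSpace m 1)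
    (mul_comm m 2 ▸ not_hasTCCover_confSpace m)
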